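/- Let C > 0 be a constant. There exists a deterministic online strategy for Builder such that, with probability at least (1 − o(1))·√C·e^{−C} as n → ∞, Builder purchases at most (1/2 + C^{−1/2}/2)·n edges among e_1, …, e_{τ_1} and her graph B_{τ_1} has minimum degree at least 1. -/

import Mathlib

open Finset Filter

namespace RGP

/-- Number of edges of the complete graph on `n` vertices. -/
def numEdges (n : ℕ) : ℕ := n * (n - 1) / 2

/-- An edge of the complete graph on `Fin n` (an unordered pair of distinct vertices). -/
abbrev EdgeType (n : ℕ) := {e : Sym2 (Fin n) // ¬ e.IsDiag}

/-- A uniformly random permutation of the edges of `K_n` is modelled by a bijection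
`σ` between positions `Fin (numEdges n)` and edges; `σ i` is the edge `e_{i+1}`. -/
abbrev Ord (n : ℕ) := Fin (numEdges n) ≃ EdgeType n

/-- Degree of a vertex `v` in a set `S` of edges. -/
def deg {n : ℕ} (S : Finset (Sym2 (Fin n))) (v : Fin n) : ℕ :=
  (S.filter (fun e => v ∈ e)).card

/-- The edge set `{e_1, …, e_m}` of `G_{n,m}` in the random graph process `σ`. -/
def procEdges {n : ℕ} (σ : Ord n) (m : ℕ) : Finset (Sym2 (Fin n)) :=
  (Finset.univ.filter (fun i : Fin (numEdges n) => (i : ℕ) < m)).image (fun i => (σ i).1)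

/-- The hitting time `τ_k` for minimum degree at least `k`. -/
noncomputable def tau {n : ℕ} (k : ℕ) (σ : Ord n) : ℕ :=
  sInf {m | ∀ v : Fin n, k ≤ deg (procEdges σ m) v}

open scoped Classical in
/-- The probability of an event under the uniformly random edge ordering. -/
noncomputable def Pr {n : ℕ} (p : Ord n → Prop) : ℝ :=
  ((Finset.univ : Finset (Ord n)).filter p).card / (Fintype.card (Ord n) : ℝ)

/-- A deterministic online strategy: given the sequence of edges revealed so far
(the last entry being the edge just revealed), decide whether to purchase it. -/
abbrev Strategy (n : ℕ) := List (Sym2 (Fin n)) → Bool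

/-- The list of the first `i` revealed edges `e_1, …, e_i`. -/
def prefixList {n : ℕ} (σ : Ord n) (i : ℕ) : List (Sym2 (Fin n)) :=
  (List.range i).filterMap (fun j => if h : j < numEdges n then some (σ ⟨j, h⟩).1 else none)

/-- `buy st σ i` is the edge set of Builder's graph `B_i`: the edges purchased by the
strategy `st` among `e_1, …, e_i`. -/
def buy {n : ℕ} (st : Strategy n) (σ : Ord n) : ℕ → Finset (Sym2 (Fin n))
  | 0 => ∅
  | i + 1 =>
    if h : i < numEdges n then
      if st (prefixList σ (i + 1)) then insert (σ ⟨i, h⟩).1 (buy st σ i)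
      else buy st σ i
    else buy st σ i

end RGP

namespace RGP

section Aux

open scoped Classical

/-- State of the game: time, revealed graph, uncovered vertices, bought edges, failure flag. -/
structure St (n : ℕ) where
  k : ℕ
  G : Finset (Sym2 (Fin n))
  U : Finset (Fin n)
  B : Finset (Sym2 (Fin n))
  dead : Prop

/-- Isolated vertices. -/
def iso {n : ℕ} (G : Finset (Sym2 (Fin n))) : Finset (Fin n) :=
  univ.filter (fun v => deg G v = 0)

/-- The purchase rule. -/
def want {n : ℕ} (m : ℕ) (s : St n) (e : Sym2 (Fin n)) : Prop :=
  (∀ v ∈ e, v ∈ s.U) ∨ (m ≤ s.k ∧ ∃ v ∈ e, v ∈ s.U)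

/-- New uncovered set. -/
noncomputable def newU {n : ℕ} (m : ℕ) (s : St n) (e : Sym2 (Fin n)) : Finset (Fin n) :=
  if want m s e then s.U.filter (fun v => v ∉ e) else s.U

/-- One step of the process. -/
noncomputable def step {n : ℕ} (m : ℕ) (K : ℝ) (D : ℕ) (s : St n) (e : Sym2 (Fin n)) : St n where
  k := s.k + 1
  G := insert e s.G
  U := newU m s e
  B := if want m s e then insert e s.B else s.B
  dead := s.dead ∨ (iso (insert e s.G) = ∅ ∧ newU m s e ≠ ∅) ∨
    (s.k + 1 = m ∧ (K < ((newU m s e).card : ℝ) ∨ ∃ a, D < deg (insert e s.G) a))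

/-- Initial state. -/
def s0 (n : ℕ) : St n := ⟨0, ∅, univ, ∅, False⟩

/-- State after a list of edges. -/
noncomputable def run {n : ℕ} (m : ℕ) (K : ℝ) (D : ℕ) (l : List (Sym2 (Fin n))) : St n :=
  l.foldl (step m K D) (s0 n)

/-- The strategy. -/
noncomputable def strat (n : ℕ) (m : ℕ) (K : ℝ) (D : ℕ) : Strategy n := fun l =>
  match l.getLast? with
  | none => false
  | some e => decide (want m (run m K D l.dropLast) e)

/-- State after `i` edges of `σ`. -/
noncomputable def stAt {n : ℕ} (m : ℕ) (K : ℝ) (D : ℕ) (σ : Ord n) (i : ℕ) : St n :=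
  run m K D (prefixList σ i)

/-- Remaining edges. -/
noncomputable def rem {n : ℕ} (s : St n) : Finset (Sym2 (Fin n)) :=
  univ.filter (fun e => ¬ e.IsDiag ∧ e ∉ s.G)

variable {n m D : ℕ} {K : ℝ}

lemma prefixList_succ (σ : Ord n) (i : ℕ) (h : i < numEdges n) :
    prefixList σ (i + 1) = prefixList σ i ++ [(σ ⟨i, h⟩).1] := by
  simp [prefixList, List.range_succ, List.filterMap_append, h]

lemma stAt_zero (σ : Ord n) : stAt m K D σ 0 = s0 n := by
  simp [stAt, prefixList, run]

lemma stAt_succ (σ : Ord n) (i : ℕ) (h : i < numEdges n) :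
    stAt m K D σ (i + 1) = step m K D (stAt m K D σ i) (σ ⟨i, h⟩).1 := by
  simp [stAt, prefixList_succ σ i h, run, List.foldl_append]

lemma buy_eq (σ : Ord n) (i : ℕ) (h : i ≤ numEdges n) :
    buy (strat n m K D) σ i = (stAt m K D σ i).B := by
  induction i with
  | zero => simp [stAt_zero, buy, s0]
  | succ i ih =>
    have hi : i < numEdges n := h
    rw [stAt_succ σ i hi, buy, dif_pos hi, ih hi.le]
    have : (strat n m K D (prefixList σ (i + 1)) = true) ↔ want m (stAt m K D σ i) (σ ⟨i, hi⟩).1 := by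
      rw [prefixList_succ σ i hi]
      simp [strat, stAt]
    simp only [step, this]

lemma k_eq (σ : Ord n) (i : ℕ) (h : i ≤ numEdges n) : (stAt m K D σ i).k = i := by
  induction i with
  | zero => simp [stAt_zero, s0]
  | succ i ih =>
    have hi : i < numEdges n := h
    rw [stAt_succ σ i hi]; simp [step, ih hi.le]

lemma procEdges_succ (σ : Ord n) (i : ℕ) (h : i < numEdges n) :
    procEdges σ (i + 1) = insert (σ ⟨i, h⟩).1 (procEdges σ i) := by
  ext e
  simp only [procEdges, mem_image, mem_filter, mem_univ, true_and, mem_insert]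
  constructor
  · rintro ⟨j, hj, rfl⟩
    rcases Nat.lt_succ_iff_lt_or_eq.1 hj with h1 | h1
    · right; exact ⟨j, h1, rfl⟩
    · left; congr 2; ext; exact h1
  · rintro (rfl | ⟨j, hj, rfl⟩)
    · exact ⟨⟨i, h⟩, Nat.lt_succ_self i, rfl⟩
    · exact ⟨j, by omega, rfl⟩

lemma G_eq (σ : Ord n) (i : ℕ) (h : i ≤ numEdges n) : (stAt m K D σ i).G = procEdges σ i := by
  induction i with
  | zero => simp [stAt_zero, s0, procEdges]
  | succ i ih =>
    have hi : i < numEdges n := h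
    rw [stAt_succ σ i hi, procEdges_succ σ i hi, ← ih hi.le]; rfl

lemma stAt_congr (σ σ' : Ord n) (i : ℕ) (h : i ≤ numEdges n)
    (heq : ∀ j : Fin (numEdges n), (j : ℕ) < i → σ j = σ' j) :
    stAt m K D σ i = stAt m K D σ' i := by
  induction i with
  | zero => simp [stAt_zero]
  | succ i ih =>
    have hi : i < numEdges n := h
    rw [stAt_succ σ i hi, stAt_succ σ' i hi, ih hi.le (fun j hj => heq j (by omega)),
      heq ⟨i, hi⟩ (by simp)]

lemma rem_eq (σ : Ord n) (i : ℕ) (h : i ≤ numEdges n) :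
    rem (stAt m K D σ i) =
      (univ.filter (fun j : Fin (numEdges n) => i ≤ (j : ℕ))).image (fun j => (σ j).1) := by
  ext e
  simp only [rem, G_eq σ i h, procEdges, mem_image, mem_filter, mem_univ, true_and]
  constructor
  · rintro ⟨hd, hn⟩
    refine ⟨σ.symm ⟨e, hd⟩, ?_, by simp⟩
    by_contra hlt
    exact hn ⟨σ.symm ⟨e, hd⟩, by omega, by simp⟩
  · rintro ⟨j, hj, rfl⟩
    refine ⟨(σ j).2, ?_⟩
    rintro ⟨j', hj', h'⟩
    have := σ.injective (Subtype.ext h')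
    subst this; omega

lemma sum_rem (σ : Ord n) (i : ℕ) (h : i ≤ numEdges n) (f : Sym2 (Fin n) → ℝ) :
    ∑ e ∈ rem (stAt m K D σ i), f e =
      ∑ j ∈ univ.filter (fun j : Fin (numEdges n) => i ≤ (j : ℕ)), f (σ j).1 := by
  rw [rem_eq σ i h, sum_image]
  intro a _ b _ hab
  exact σ.injective (Subtype.ext hab)

lemma sum_step_le (Φ : ℕ → St n → ℝ) (i : ℕ) (hi : i < numEdges n)
    (hst : ∀ σ : Ord n, ((rem (stAt m K D σ i)).card : ℝ) * Φ i (stAt m K D σ i) ≤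
      ∑ e ∈ rem (stAt m K D σ i), Φ (i + 1) (step m K D (stAt m K D σ i) e)) :
    ∑ σ : Ord n, Φ i (stAt m K D σ i) ≤ ∑ σ : Ord n, Φ (i + 1) (stAt m K D σ (i + 1)) := by
  set J := univ.filter (fun j : Fin (numEdges n) => i ≤ (j : ℕ)) with hJ
  have hpos : 0 < J.card := card_pos.2 ⟨⟨i, hi⟩, by simp [hJ]⟩
  have hcard : ∀ σ : Ord n, ((rem (stAt m K D σ i)).card : ℝ) = J.card := by
    intro σ
    have := sum_rem (m := m) (K := K) (D := D) σ i hi.le (fun _ => 1)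
    simpa using this
  have hswap : ∀ j ∈ J, ∑ σ : Ord n, Φ (i + 1) (stAt m K D σ (i + 1)) =
      ∑ σ : Ord n, Φ (i + 1) (step m K D (stAt m K D σ i) (σ j).1) := by
    intro j hj
    have hj' : i ≤ (j : ℕ) := by simpa [hJ] using hj
    let E : Ord n ≃ Ord n :=
      { toFun := fun σ => (Equiv.swap ⟨i, hi⟩ j).trans σ
        invFun := fun σ => (Equiv.swap ⟨i, hi⟩ j).trans σ
        left_inv := fun σ => by ext x; simp
        right_inv := fun σ => by ext x; simp }
    rw [← Equiv.sum_comp E]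
    refine sum_congr rfl fun σ _ => ?_
    rw [stAt_succ _ i hi]
    have h1 : stAt m K D (E σ) i = stAt m K D σ i := by
      apply stAt_congr _ _ _ hi.le
      intro x hx
      change σ (Equiv.swap ⟨i, hi⟩ j x) = σ x
      rw [Equiv.swap_apply_of_ne_of_ne]
      · intro h; rw [h] at hx; simp at hx
      · intro h; rw [h] at hx; omega
    have h2 : (E σ) ⟨i, hi⟩ = σ j := by
      change σ (Equiv.swap ⟨i, hi⟩ j ⟨i, hi⟩) = σ j
      rw [Equiv.swap_apply_left]
    rw [h1, h2]
  have h3 : (J.card : ℝ) * ∑ σ : Ord n, Φ (i + 1) (stAt m K D σ (i + 1)) =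
      ∑ σ : Ord n, ∑ e ∈ rem (stAt m K D σ i), Φ (i + 1) (step m K D (stAt m K D σ i) e) := by
    rw [← nsmul_eq_mul, ← sum_const, sum_congr rfl hswap, sum_comm]
    exact sum_congr rfl fun σ _ => (sum_rem σ i hi.le
      (fun e => Φ (i + 1) (step m K D (stAt m K D σ i) e))).symm
  have h4 : (J.card : ℝ) * ∑ σ : Ord n, Φ i (stAt m K D σ i) ≤
      (J.card : ℝ) * ∑ σ : Ord n, Φ (i + 1) (stAt m K D σ (i + 1)) := by
    rw [h3, mul_sum]
    exact sum_le_sum fun σ _ => by rw [← hcard σ]; exact hst σ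
  exact le_of_mul_le_mul_left h4 (by exact_mod_cast hpos)

lemma card_at (v : Fin n) (W : Finset (Fin n)) :
    (univ.filter (fun e : Sym2 (Fin n) => ¬ e.IsDiag ∧ v ∈ e ∧ ∀ w ∈ e, w ≠ v → w ∈ W)).card
      = (W.erase v).card := by
  have : univ.filter (fun e : Sym2 (Fin n) => ¬ e.IsDiag ∧ v ∈ e ∧ ∀ w ∈ e, w ≠ v → w ∈ W)
      = (W.erase v).image (fun w => s(v, w)) := by
    ext e
    simp only [mem_filter, mem_univ, true_and, mem_image, mem_erase]
    constructor
    · rintro ⟨hd, hv, hw⟩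
      obtain ⟨w, rfl⟩ := Sym2.mem_iff_exists.1 hv
      have hne : w ≠ v := fun h => hd (by simp [h])
      exact ⟨w, ⟨hne, hw w (by simp) hne⟩, rfl⟩
    · rintro ⟨w, ⟨hne, hw⟩, rfl⟩
      refine ⟨by simpa using hne.symm, by simp, ?_⟩
      intro x hx hxv
      rcases Sym2.mem_iff.1 hx with h | h
      · exact absurd h hxv
      · rwa [h]
  rw [this, card_image_of_injective]
  intro a b hab
  exact Sym2.congr_right.1 hab

/-- Invariants of reachable states. -/
structure Inv (m : ℕ) (K : ℝ) (D : ℕ) (s : St n) : Prop where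
  diag : ∀ e ∈ s.G, ¬ e.IsDiag
  card : s.G.card = s.k
  indep : ∀ e ∈ s.G, ¬ ∀ v ∈ e, v ∈ s.U
  isoU : iso s.G ⊆ s.U
  cov : ∀ v, v ∉ s.U → 1 ≤ deg s.B v
  bud1 : s.k ≤ m → 2 * s.B.card + s.U.card ≤ n
  bud2 : m ≤ s.k → ¬ s.dead → 2 * ((s.B.card : ℝ) + s.U.card) ≤ n + K
  degD : m ≤ s.k → ¬ s.dead → ∀ a ∈ s.U, deg s.G a ≤ D
  alive : ¬ s.dead → iso s.G = ∅ → s.U = ∅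
  dead1 : s.k < m → s.dead → iso s.G = ∅

lemma deg_insert {S : Finset (Sym2 (Fin n))} {e : Sym2 (Fin n)} (he : e ∉ S) (v : Fin n) :
    deg (insert e S) v = deg S v + if v ∈ e then 1 else 0 := by
  unfold deg
  rw [filter_insert]
  split_ifs with h
  · rw [card_insert_of_notMem (by simp [he])]
  · rfl

lemma deg_mono {S T : Finset (Sym2 (Fin n))} (h : S ⊆ T) (v : Fin n) : deg S v ≤ deg T v :=
  card_le_card (filter_subset_filter _ h)

lemma iso_insert {S : Finset (Sym2 (Fin n))} {e : Sym2 (Fin n)} (he : e ∉ S) :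
    iso (insert e S) = (iso S).filter (fun v => v ∉ e) := by
  ext v
  simp only [iso, mem_filter, mem_univ, true_and, deg_insert he]
  split_ifs with h <;> simp [h]

lemma cnt_pair (U : Finset (Fin n)) {a b : Fin n} (hab : a ≠ b) :
    (U.filter (fun v => v ∈ s(a, b))).card = (if a ∈ U then 1 else 0) + (if b ∈ U then 1 else 0) := by
  have : U.filter (fun v => v ∈ s(a, b)) = U.filter (fun v => v = a) ∪ U.filter (fun v => v = b) := by
    ext v; simp [← filter_or]
  rw [this, card_union_of_disjoint]
  · simp only [filter_eq']
    congr 1 <;> split_ifs <;> simp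
  · rw [disjoint_left]; simp only [mem_filter]
    rintro x ⟨_, rfl⟩ ⟨_, h⟩; exact hab h

/-- Number of endpoints of `e` in `U`. -/
noncomputable def cnt (U : Finset (Fin n)) (e : Sym2 (Fin n)) : ℕ := (U.filter (fun v => v ∈ e)).card

lemma cnt_le_two (U : Finset (Fin n)) {e : Sym2 (Fin n)} (he : ¬ e.IsDiag) : cnt U e ≤ 2 := by
  induction e using Sym2.ind with
  | _ a b =>
    have hab : a ≠ b := by simpa using he
    unfold cnt; rw [cnt_pair U hab]; split_ifs <;> omega

lemma cnt_eq_two (U : Finset (Fin n)) {e : Sym2 (Fin n)} (he : ¬ e.IsDiag) :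
    cnt U e = 2 ↔ ∀ v ∈ e, v ∈ U := by
  induction e using Sym2.ind with
  | _ a b =>
    have hab : a ≠ b := by simpa using he
    unfold cnt; rw [cnt_pair U hab]; 
    by_cases h1 : a ∈ U <;> by_cases h2 : b ∈ U <;> simp [h1, h2]

lemma cnt_pos (U : Finset (Fin n)) {e : Sym2 (Fin n)} :
    1 ≤ cnt U e ↔ ∃ v ∈ e, v ∈ U := by
  unfold cnt
  rw [Nat.one_le_iff_ne_zero, ← Nat.pos_iff_ne_zero, card_pos]
  constructor
  · rintro ⟨v, hv⟩; rw [mem_filter] at hv; exact ⟨v, hv.2, hv.1⟩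
  · rintro ⟨v, h1, h2⟩; exact ⟨v, by simp [h1, h2]⟩

lemma cnt_add (U : Finset (Fin n)) (e : Sym2 (Fin n)) :
    (U.filter (fun v => v ∉ e)).card + cnt U e = U.card := by
  unfold cnt
  rw [add_comm]; exact card_filter_add_card_filter_not _

lemma inv_s0 (hm : 0 < m) : Inv m K D (s0 n) where
  diag := by simp [s0]
  card := by simp [s0]
  indep := by simp [s0]
  isoU := by simp [s0]
  cov := by simp [s0]
  bud1 := by simp [s0]
  bud2 := by intro h; simp [s0] at h; omega
  degD := by intro h; simp [s0] at h; omega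
  alive := by simp [s0, iso, deg]
  dead1 := by simp [s0]

lemma inv_step {s : St n} (h : Inv m K D s) {e : Sym2 (Fin n)} (hd : ¬ e.IsDiag) (he : e ∉ s.G) :
    Inv m K D (step m K D s e) := by
  have hUsub : newU m s e ⊆ s.U := by
    unfold newU; split_ifs
    · exact filter_subset _ _
    · exact subset_rfl
  have hall : (∀ v ∈ e, v ∈ s.U) → want m s e := fun h => Or.inl h
  have hisoU : iso (insert e s.G) ⊆ newU m s e := by
    rw [iso_insert he]
    unfold newU; split_ifs
    · exact filter_subset_filter _ h.isoU
    · exact (filter_subset _ _).trans h.isoU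
  have hB1 : (step m K D s e).B.card ≤ s.B.card + 1 := by
    simp only [step]; split_ifs
    · exact card_insert_le _ _
    · omega
  have hbud1 : s.k + 1 ≤ m → 2 * (step m K D s e).B.card + (newU m s e).card ≤ n := by
    intro hk
    have h0 := h.bud1 (by omega)
    by_cases hw : want m s e
    · have hc : cnt s.U e = 2 := by
        rw [cnt_eq_two _ hd]
        rcases hw with hw | hw
        · exact hw
        · omega
      have := cnt_add s.U e
      have h3 : (newU m s e).card = (s.U.filter (fun v => v ∉ e)).card := by simp [newU, hw]
      omega
    · have h3 : newU m s e = s.U := by simp [newU, hw]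
      have h4 : (step m K D s e).B = s.B := by simp [step, hw]
      rw [h3, h4]; exact h0
  refine ⟨?_, ?_, ?_, hisoU, ?_, hbud1, ?_, ?_, ?_, ?_⟩
  · intro e' he'
    rcases mem_insert.1 he' with rfl | h'
    · exact hd
    · exact h.diag _ h'
  · simp [step, card_insert_of_notMem he, h.card]
  · intro e' he' hcon
    rcases mem_insert.1 he' with rfl | h'
    · have hw := hall fun v hv => hUsub (hcon v hv)
      obtain ⟨v, hv⟩ : ∃ v, v ∈ e' := ⟨_, Sym2.out_fst_mem e'⟩
      have := hcon v hv
      simp [step, newU, hw, hv] at this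
    · exact h.indep _ h' fun v hv => hUsub (hcon v hv)
  · intro v hv
    change v ∉ newU m s e at hv
    by_cases hvU : v ∈ s.U
    · have hw : want m s e := by
        by_contra hw; simp [newU, hw, hvU] at hv
      have hve : v ∈ e := by
        by_contra hve; simp [newU, hw, hvU, hve] at hv
      simp only [step, hw, if_true]
      exact card_pos.2 ⟨e, by simp [hve]⟩
    · refine (h.cov v hvU).trans (deg_mono ?_ v)
      simp only [step]; split_ifs
      · exact subset_insert _ _
      · exact subset_rfl
  · intro hk hnd
    simp only [step] at hk
    simp only [step, not_or, not_and, not_exists] at hnd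
    obtain ⟨hnd0, hnd1, hnd2⟩ := hnd
    rcases Nat.lt_or_ge s.k m with hlt | hge
    · have h1 := hbud1 (by omega)
      have h2 := (hnd2 (by omega)).1
      have h1' : (2 * ((step m K D s e).B.card : ℝ) + (newU m s e).card) ≤ n := by exact_mod_cast h1
      change 2 * (((step m K D s e).B.card : ℝ) + (newU m s e).card) ≤ n + K
      linarith
    · have h0 := h.bud2 hge hnd0
      have : (step m K D s e).B.card + (newU m s e).card ≤ s.B.card + s.U.card := by
        by_cases hw : want m s e
        · have hc : 1 ≤ cnt s.U e := by
            rw [cnt_pos]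
            rcases hw with hw | hw
            · exact ⟨_, Sym2.out_fst_mem e, hw _ (Sym2.out_fst_mem e)⟩
            · exact hw.2
          have := cnt_add s.U e
          have h3 : (newU m s e).card = (s.U.filter (fun v => v ∉ e)).card := by simp [newU, hw]
          omega
        · have h3 : newU m s e = s.U := by simp [newU, hw]
          have h4 : (step m K D s e).B = s.B := by simp [step, hw]
          rw [h3, h4]
      have h' : ((step m K D s e).B.card : ℝ) + (newU m s e).card ≤ s.B.card + s.U.card := by
        exact_mod_cast this
      change 2 * (((step m K D s e).B.card : ℝ) + (newU m s e).card) ≤ n + K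
      linarith
  · intro hk hnd a ha
    simp only [step] at hk
    simp only [step, not_or, not_and, not_exists, not_lt] at hnd
    obtain ⟨hnd0, hnd1, hnd2⟩ := hnd
    change a ∈ newU m s e at ha
    change deg (insert e s.G) a ≤ D
    rcases Nat.lt_or_ge s.k m with hlt | hge
    · exact (hnd2 (by omega)).2 a
    · have haU := hUsub ha
      have hae : a ∉ e := by
        intro hae
        have hw : want m s e := Or.inr ⟨hge, a, hae, haU⟩
        simp [newU, hw, hae] at ha
      rw [deg_insert he]; simp only [hae, if_false]
      exact h.degD hge hnd0 a haU
  · intro hnd hiso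
    simp only [step, not_or, not_and, not_exists, not_not] at hnd
    exact hnd.2.1 hiso
  · intro hk hdead
    simp only [step] at hk
    rcases hdead with h1 | h1 | h1
    · have := h.dead1 (by omega) h1
      change iso (insert e s.G) = ∅
      rw [iso_insert he, this]; simp
    · exact h1.1
    · omega

lemma inv_stAt (hm : 0 < m) (σ : Ord n) (i : ℕ) (h : i ≤ numEdges n) :
    Inv m K D (stAt m K D σ i) := by
  induction i with
  | zero => rw [stAt_zero]; exact inv_s0 hm
  | succ i ih =>
    have hi : i < numEdges n := h
    rw [stAt_succ σ i hi]
    apply inv_step (ih hi.le) (σ ⟨i, hi⟩).2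
    rw [G_eq σ i hi.le]
    simp only [procEdges, mem_image, mem_filter, mem_univ, true_and, not_exists, not_and]
    intro j hj hj'
    have := σ.injective (Subtype.ext hj')
    rw [this] at hj; simp at hj

lemma card_nondiag : Fintype.card (EdgeType n) = numEdges n := by
  rw [Sym2.card_subtype_not_diag, Fintype.card_fin, Nat.choose_two_right]; rfl

lemma card_rem {s : St n} (h : Inv m K D s) : (rem s).card + s.k = numEdges n := by
  have h1 : (univ.filter (fun e : Sym2 (Fin n) => ¬ e.IsDiag)).card = numEdges n := by
    rw [← card_nondiag, Fintype.card_subtype]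
  have h2 : (univ.filter (fun e : Sym2 (Fin n) => ¬ e.IsDiag)) = rem s ∪ s.G := by
    ext e
    simp only [rem, mem_filter, mem_univ, true_and, mem_union]
    constructor
    · intro hd; by_cases he : e ∈ s.G <;> simp [hd, he]
    · rintro (h' | h')
      · exact h'.1
      · exact h.diag _ h'
  rw [← h1, h2, card_union_of_disjoint, h.card]
  rw [disjoint_left]; intro e he; simp only [rem, mem_filter] at he; exact he.2.2

lemma card_rem_at {s : St n} (h : Inv m K D s) (v : Fin n) :
    ((rem s).filter (fun e => v ∈ e)).card + deg s.G v = n - 1 := by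
  have h1 := card_at v (univ : Finset (Fin n))
  simp only [mem_univ, implies_true, and_true, card_erase_of_mem, card_univ, Fintype.card_fin] at h1
  rw [← h1]
  unfold deg
  rw [← card_union_of_disjoint]
  · congr 1
    ext e
    simp only [rem, mem_filter, mem_univ, true_and, mem_union]
    constructor
    · rintro (h' | h')
      · exact ⟨h'.1.1, h'.2⟩
      · exact ⟨h.diag _ h'.1, h'.2⟩
    · rintro ⟨hd, hv⟩; by_cases he : e ∈ s.G <;> simp [hd, he, hv]
  · rw [disjoint_left]; intro e he; simp only [rem, mem_filter] at he ⊢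
    intro h'; exact he.1.2.2 h'.1

/-- Remaining edges inside `U`. -/
noncomputable def R2 (s : St n) : Finset (Sym2 (Fin n)) := (rem s).filter (fun e => cnt s.U e = 2)

/-- Remaining edges with exactly one endpoint in `U`. -/
noncomputable def R1 (s : St n) : Finset (Sym2 (Fin n)) := (rem s).filter (fun e => cnt s.U e = 1)

lemma R2_eq {s : St n} (h : Inv m K D s) :
    R2 s = univ.filter (fun e : Sym2 (Fin n) => ¬ e.IsDiag ∧ ∀ v ∈ e, v ∈ s.U) := by
  ext e
  simp only [R2, rem, mem_filter, mem_univ, true_and]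
  constructor
  · rintro ⟨⟨hd, _⟩, hc⟩; exact ⟨hd, (cnt_eq_two _ hd).1 hc⟩
  · rintro ⟨hd, hc⟩; exact ⟨⟨hd, fun hG => h.indep _ hG hc⟩, (cnt_eq_two _ hd).2 hc⟩

lemma card_R2_at {s : St n} (h : Inv m K D s) (v : Fin n) (hv : v ∈ s.U) :
    ((R2 s).filter (fun e => v ∈ e)).card = s.U.card - 1 := by
  rw [← card_erase_of_mem hv, ← card_at v s.U, R2_eq h]
  congr 1
  ext e
  simp only [mem_filter, mem_univ, true_and]
  constructor
  · rintro ⟨⟨hd, h1⟩, h2⟩; exact ⟨hd, h2, fun w hw _ => h1 w hw⟩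
  · rintro ⟨hd, h2, h1⟩; refine ⟨⟨hd, fun w hw => ?_⟩, h2⟩
    by_cases hwv : w = v
    · rwa [hwv]
    · exact h1 w hw hwv

lemma sum_cnt (A : Finset (Sym2 (Fin n))) (X : Finset (Fin n)) :
    ∑ e ∈ A, cnt X e = ∑ v ∈ X, (A.filter (fun e => v ∈ e)).card := by
  unfold cnt
  simp only [card_filter]
  exact sum_comm

lemma sum_cnt_R2 {s : St n} (h : Inv m K D s) {X : Finset (Fin n)} (hX : X ⊆ s.U) :
    ∑ e ∈ R2 s, cnt X e = X.card * (s.U.card - 1) := by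
  rw [sum_cnt, sum_congr rfl (fun v hv => card_R2_at h v (hX hv)), sum_const, smul_eq_mul]

lemma card_R2 {s : St n} (h : Inv m K D s) : 2 * (R2 s).card = s.U.card * (s.U.card - 1) := by
  rw [← sum_cnt_R2 h (subset_refl s.U)]
  have h1 : ∑ e ∈ R2 s, cnt s.U e = ∑ e ∈ R2 s, 2 :=
    sum_congr rfl (fun e he => (mem_filter.1 he).2)
  rw [h1, sum_const, smul_eq_mul, mul_comm]

lemma sum_split {s : St n} (f : ℕ → Sym2 (Fin n) → ℝ) (h0 : ∀ e, f 0 e = 0) :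
    ∑ e ∈ rem s, f (cnt s.U e) e = ∑ e ∈ R1 s, f 1 e + ∑ e ∈ R2 s, f 2 e := by
  unfold R1 R2
  rw [sum_filter, sum_filter, ← sum_add_distrib]
  refine sum_congr rfl fun e he => ?_
  have hd : ¬ e.IsDiag := by simp only [rem, mem_filter] at he; exact he.2.1
  have := cnt_le_two s.U hd
  generalize cnt s.U e = c at *
  interval_cases c <;> simp [h0]

lemma sum_cnt_rem {s : St n} (h : Inv m K D s) (hn : 1 ≤ n) (X : Finset (Fin n)) :
    (∑ e ∈ rem s, (cnt X e : ℝ)) = ∑ v ∈ X, ((n : ℝ) - 1 - deg s.G v) := by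
  have := sum_cnt (rem s) X
  have h2 : (∑ e ∈ rem s, (cnt X e : ℝ)) = ∑ v ∈ X, (((rem s).filter (fun e => v ∈ e)).card : ℝ) := by
    exact_mod_cast this
  rw [h2]
  refine sum_congr rfl fun v _ => ?_
  have h3 := card_rem_at h v
  have h4 : (((rem s).filter (fun e => v ∈ e)).card : ℝ) + deg s.G v = ((n - 1 : ℕ) : ℝ) := by
    exact_mod_cast h3
  rw [Nat.cast_sub hn] at h4
  push_cast at h4; linarith

lemma mem_rem {s : St n} {e : Sym2 (Fin n)} : e ∈ rem s ↔ ¬ e.IsDiag ∧ e ∉ s.G := by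
  simp [rem]

lemma iso_deg {s : St n} {v : Fin n} (hv : v ∈ iso s.G) : deg s.G v = 0 := by
  simpa [iso] using hv

lemma sum_mono_range (Φ : ℕ → St n → ℝ) (hm : 0 < m) {a b : ℕ} (hab : a ≤ b) (hb : b ≤ numEdges n)
    (hst : ∀ s : St n, Inv m K D s → a ≤ s.k → s.k < b → ((rem s).card : ℝ) * Φ s.k s ≤
      ∑ e ∈ rem s, Φ (s.k + 1) (step m K D s e)) :
    ∑ σ : Ord n, Φ a (stAt m K D σ a) ≤ ∑ σ : Ord n, Φ b (stAt m K D σ b) := by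
  induction b, hab using Nat.le_induction with
  | base => exact le_rfl
  | succ b hab ih =>
    have hb' : b < numEdges n := hb
    refine (ih hb'.le fun s hs h1 h2 => hst s hs h1 (by omega)).trans ?_
    apply sum_step_le Φ b hb'
    intro σ
    have hk := k_eq (m := m) (K := K) (D := D) σ b hb'.le
    have := hst _ (inv_stAt (m := m) (K := K) (D := D) hm σ b hb'.le) (by omega) (by omega)
    rw [hk] at this
    exact this

lemma card_iso_step {s : St n} {e : Sym2 (Fin n)} (he : e ∉ s.G) :
    ((iso (insert e s.G)).card : ℝ) = (iso s.G).card - cnt (iso s.G) e := by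
  have := cnt_add (iso s.G) e
  rw [iso_insert he, ← this]; push_cast; ring

/-- Expected number of isolated vertices. -/
lemma exp_iso (hm : 0 < m) (hmN : m < numEdges n) (hn : 1 ≤ n) (ρ : ℝ) (hρ0 : 0 ≤ ρ)
    (hρ : ρ * ((numEdges n : ℝ) - m) ≤ (numEdges n : ℝ) - m - (n - 1)) (hρ1 : ρ ≤ 1) :
    (Fintype.card (Ord n) : ℝ) * (n * ρ ^ m) ≤
      ∑ σ : Ord n, ((iso (stAt m K D σ m).G).card : ℝ) := by
  have := sum_mono_range (m := m) (K := K) (D := D)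
    (fun i s => ((iso s.G).card : ℝ) * ρ ^ (m - i)) hm (Nat.zero_le m) hmN.le ?_
  · simpa [stAt_zero, s0, iso, deg] using this
  · intro s hs _ hk
    have h1 : ∑ e ∈ rem s, ((iso (step m K D s e).G).card : ℝ) * ρ ^ (m - (s.k + 1)) =
        (((rem s).card : ℝ) - (n - 1)) * (iso s.G).card * ρ ^ (m - (s.k + 1)) := by
      rw [← sum_mul]
      congr 1
      have : ∀ e ∈ rem s, ((iso (step m K D s e).G).card : ℝ) = (iso s.G).card - cnt (iso s.G) e :=
        fun e he => card_iso_step (mem_rem.1 he).2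
      rw [sum_congr rfl this, sum_sub_distrib, sum_cnt_rem hs hn, sum_const, nsmul_eq_mul]
      have h2 : ∑ v ∈ iso s.G, ((n : ℝ) - 1 - deg s.G v) = ∑ v ∈ iso s.G, ((n : ℝ) - 1) :=
        sum_congr rfl fun v hv => by rw [iso_deg hv]; simp
      rw [h2, sum_const, nsmul_eq_mul]; ring
    rw [h1]
    have h3 : m - s.k = (m - (s.k + 1)) + 1 := by omega
    rw [h3, pow_succ]
    have hc := card_rem hs
    have hc' : ((rem s).card : ℝ) + s.k = numEdges n := by exact_mod_cast hc
    have hk' : (s.k : ℝ) ≤ m := by exact_mod_cast hk.le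
    have h4 : ((rem s).card : ℝ) * ρ ≤ ((rem s).card : ℝ) - (n - 1) := by
      nlinarith
    have h5 : (0 : ℝ) ≤ (iso s.G).card * ρ ^ (m - (s.k + 1)) := by positivity
    calc ((rem s).card : ℝ) * ((iso s.G).card * (ρ ^ (m - (s.k + 1)) * ρ))
        = (((rem s).card : ℝ) * ρ) * ((iso s.G).card * ρ ^ (m - (s.k + 1))) := by ring
      _ ≤ (((rem s).card : ℝ) - (n - 1)) * ((iso s.G).card * ρ ^ (m - (s.k + 1))) :=
        mul_le_mul_of_nonneg_right h4 h5
      _ = _ := by ring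

/-- Expected exponential degree sum. -/
lemma exp_deg (hm : 0 < m) (hmN : m < numEdges n) (hn : 1 ≤ n) (ρ : ℝ) (hρ1 : 1 ≤ ρ)
    (hρ : (numEdges n : ℝ) - m + (n - 1) ≤ ρ * ((numEdges n : ℝ) - m)) :
    ∑ σ : Ord n, ∑ v, (2 : ℝ) ^ deg (stAt m K D σ m).G v ≤
    (Fintype.card (Ord n) : ℝ) * (n * ρ ^ m) := by
  have := sum_mono_range (m := m) (K := K) (D := D)
    (fun i s => - ((∑ v, (2 : ℝ) ^ deg s.G v) * ρ ^ (m - i))) hm (Nat.zero_le m) hmN.le ?_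
  · simp only [stAt_zero, sum_neg_distrib, neg_le_neg_iff] at this
    simpa [s0, iso, deg] using this
  · intro s hs _ hk
    have h1 : ∑ e ∈ rem s, ∑ v, (2 : ℝ) ^ deg (step m K D s e).G v ≤
        (((rem s).card : ℝ) + (n - 1)) * ∑ v, (2 : ℝ) ^ deg s.G v := by
      rw [sum_comm, mul_sum]
      refine sum_le_sum fun v _ => ?_
      have : ∀ e ∈ rem s, (2 : ℝ) ^ deg (step m K D s e).G v =
          2 ^ deg s.G v + 2 ^ deg s.G v * if v ∈ e then 1 else 0 := by
        intro e he
        change (2 : ℝ) ^ deg (insert e s.G) v = _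
        rw [deg_insert (mem_rem.1 he).2]
        split_ifs <;> ring
      rw [sum_congr rfl this, sum_add_distrib, ← mul_sum, sum_const, nsmul_eq_mul, sum_boole]
      have h2 := card_rem_at hs v
      have h2' : (((rem s).filter (fun e => v ∈ e)).card : ℝ) ≤ n - 1 := by
        have : ((rem s).filter (fun e => v ∈ e)).card + 1 ≤ n := by omega
        have : (((rem s).filter (fun e => v ∈ e)).card : ℝ) + 1 ≤ n := by exact_mod_cast this
        linarith
      have : (0 : ℝ) < 2 ^ deg s.G v := by positivity
      nlinarith
    rw [sum_neg_distrib, mul_neg, neg_le_neg_iff, ← sum_mul]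
    have h3 : m - s.k = (m - (s.k + 1)) + 1 := by omega
    rw [h3, pow_succ]
    have hc := card_rem hs
    have hc' : ((rem s).card : ℝ) + s.k = numEdges n := by exact_mod_cast hc
    have hk' : (s.k : ℝ) ≤ m := by exact_mod_cast hk.le
    have h4 : ((rem s).card : ℝ) + (n - 1) ≤ ((rem s).card : ℝ) * ρ := by
      nlinarith
    have h5 : (0 : ℝ) ≤ (∑ v, (2 : ℝ) ^ deg s.G v) := by positivity
    have h6 : (0 : ℝ) ≤ ρ ^ (m - (s.k + 1)) := by positivity
    calc _ ≤ ((((rem s).card : ℝ) + (n - 1)) * ∑ v, (2 : ℝ) ^ deg s.G v) * ρ ^ (m - (s.k + 1)) :=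
          mul_le_mul_of_nonneg_right h1 h6
      _ ≤ ((((rem s).card : ℝ) * ρ) * ∑ v, (2 : ℝ) ^ deg s.G v) * ρ ^ (m - (s.k + 1)) :=
          mul_le_mul_of_nonneg_right (mul_le_mul_of_nonneg_right h4 h5) h6
      _ = _ := by ring

/-- Exponential tail for the number of uncovered vertices. -/
lemma exp_unc (hm : 0 < m) (hmN : m < numEdges n) (δ p : ℝ) (hδ : 0 ≤ δ) (hp : 0 ≤ p)
    (hpK : ∀ u : ℕ, K < u → u ≤ n → p * numEdges n ≤ (u : ℝ) * (u - 1) / 2) (hK : 0 ≤ K) :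
    ∑ σ : Ord n, (if K < ((stAt m K D σ m).U.card : ℝ) then
        Real.exp (δ * (stAt m K D σ m).U.card) else 0) ≤
    (Fintype.card (Ord n) : ℝ) *
      (Real.exp (δ * n) * (Real.exp (-(p * (1 - Real.exp (-(2 * δ)))))) ^ m) := by
  set r := Real.exp (-(p * (1 - Real.exp (-(2 * δ))))) with hr
  have hr0 : 0 < r := Real.exp_pos _
  have := sum_mono_range (m := m) (K := K) (D := D)
    (fun i s => - ((if K < (s.U.card : ℝ) then Real.exp (δ * s.U.card) else 0) * r ^ (m - i)))
      hm (Nat.zero_le m) hmN.le ?_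
  · simp only [stAt_zero, sum_neg_distrib, neg_le_neg_iff, Nat.sub_self, pow_zero, mul_one,
      Nat.sub_zero] at this
    refine this.trans ?_
    rw [sum_const, nsmul_eq_mul, card_univ]
    refine mul_le_mul_of_nonneg_left ?_ (Nat.cast_nonneg _)
    refine mul_le_mul_of_nonneg_right ?_ (by positivity)
    simp only [s0, card_univ, Fintype.card_fin]
    split_ifs
    · exact le_rfl
    · positivity
  · intro s hs _ hk
    rw [sum_neg_distrib, mul_neg, neg_le_neg_iff, ← sum_mul]
    have h3 : m - s.k = (m - (s.k + 1)) + 1 := by omega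
    rw [h3, pow_succ]
    have h6 : (0 : ℝ) ≤ r ^ (m - (s.k + 1)) := by positivity
    have hsub : ∀ e, ((step m K D s e).U.card : ℝ) ≤ s.U.card := by
      intro e
      have : (step m K D s e).U ⊆ s.U := by
        change newU m s e ⊆ s.U
        unfold newU; split_ifs
        · exact filter_subset _ _
        · exact subset_rfl
      exact_mod_cast card_le_card this
    suffices h : ∑ e ∈ rem s, (if K < ((step m K D s e).U.card : ℝ) then
        Real.exp (δ * (step m K D s e).U.card) else 0) ≤
        ((rem s).card : ℝ) * ((if K < (s.U.card : ℝ) then Real.exp (δ * s.U.card) else 0) * r) by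
      calc _ ≤ (((rem s).card : ℝ) *
            ((if K < (s.U.card : ℝ) then Real.exp (δ * s.U.card) else 0) * r)) *
              r ^ (m - (s.k + 1)) := mul_le_mul_of_nonneg_right h h6
        _ = _ := by ring
    by_cases hKU : K < (s.U.card : ℝ)
    · rw [if_pos hKU]
      set x := 1 - Real.exp (-(2 * δ)) with hx
      have hx0 : 0 ≤ x := by
        have : Real.exp (-(2 * δ)) ≤ 1 := Real.exp_le_one_iff.2 (by linarith)
        linarith
      have hterm : ∀ e ∈ rem s, (if K < ((step m K D s e).U.card : ℝ) then
          Real.exp (δ * (step m K D s e).U.card) else 0) ≤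
          Real.exp (δ * s.U.card) - (Real.exp (δ * s.U.card) * x) *
            (if cnt s.U e = 2 then 1 else 0) := by
        intro e he
        by_cases hc : cnt s.U e = 2
        · have hw : want m s e := Or.inl ((cnt_eq_two _ (mem_rem.1 he).1).1 hc)
          have h7 := cnt_add s.U e
          have h8 : (step m K D s e).U.card + 2 = s.U.card := by
            have : (step m K D s e).U = s.U.filter (fun v => v ∉ e) := by simp [step, newU, hw]
            rw [this]; omega
          have h8' : ((step m K D s e).U.card : ℝ) = s.U.card - 2 := by
            rw [← h8]; push_cast; ring
          have h9 : Real.exp (δ * s.U.card) - (Real.exp (δ * s.U.card) * x) * 1 =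
              Real.exp (δ * (step m K D s e).U.card) := by
            have : δ * ((s.U.card : ℝ) - 2) = δ * s.U.card + -(2 * δ) := by ring
            rw [h8', this, Real.exp_add, hx]; ring
          rw [if_pos hc, h9]
          split_ifs
          · exact le_rfl
          · positivity
        · rw [if_neg hc, mul_zero, sub_zero]
          split_ifs
          · exact Real.exp_le_exp.2 (mul_le_mul_of_nonneg_left (hsub e) hδ)
          · positivity
      refine (sum_le_sum hterm).trans ?_
      rw [sum_sub_distrib, sum_const, nsmul_eq_mul, ← mul_sum, sum_boole]
      change _ - _ * ((R2 s).card : ℝ) ≤ _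
      have h10 := card_R2 hs
      have hu1 : 1 ≤ s.U.card := by
        have : (0 : ℝ) < s.U.card := lt_of_le_of_lt hK hKU
        exact_mod_cast this
      have h10' : 2 * ((R2 s).card : ℝ) = s.U.card * (s.U.card - 1) := by
        have : (2 * ((R2 s).card : ℝ)) = s.U.card * ((s.U.card - 1 : ℕ) : ℝ) := by exact_mod_cast h10
        rw [this, Nat.cast_sub hu1]; simp
      have h11 := hpK s.U.card hKU (by simpa using card_le_univ s.U)
      have hc := card_rem hs
      have hc' : ((rem s).card : ℝ) + s.k = numEdges n := by exact_mod_cast hc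
      have hk0 : (0 : ℝ) ≤ s.k := Nat.cast_nonneg _
      have h12 : p * (rem s).card ≤ (R2 s).card := by nlinarith
      have h13 : 1 - p * x ≤ r := by
        have := Real.add_one_le_exp (-(p * x)); rw [hr]; linarith
      have hE : 0 < Real.exp (δ * s.U.card) := Real.exp_pos _
      have h14 : p * (rem s).card * x ≤ (R2 s).card * x := mul_le_mul_of_nonneg_right h12 hx0
      have h15 : ((rem s).card : ℝ) * (1 - p * x) ≤ (rem s).card * r :=
        mul_le_mul_of_nonneg_left h13 (Nat.cast_nonneg _)
      have h16 : ((rem s).card : ℝ) - (R2 s).card * x ≤ (rem s).card * r := by linarith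
      have := mul_le_mul_of_nonneg_left h16 hE.le
      linarith
    · rw [if_neg hKU, zero_mul, mul_zero]
      apply le_of_eq
      apply sum_eq_zero
      intro e _
      rw [if_neg]
      intro h
      exact hKU (h.trans_le (hsub e))

/-- Success part of the phase-two potential. -/
noncomputable def phi (s : St n) : ℝ :=
  if s.dead then 0 else if s.U = ∅ then 1 else ((iso s.G).card : ℝ) / s.U.card

lemma log_drop {u c : ℕ} (hu : 2 ≤ u) (hc1 : 1 ≤ c) (hcu : c ≤ u) :
    (1 : ℝ) / u ≤ Real.log u - Real.log ((u - c : ℕ) : ℝ) := by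
  have hu0 : (0 : ℝ) < u := by positivity
  have hu1 : (0 : ℝ) < ((u - 1 : ℕ) : ℝ) := by
    have : 0 < u - 1 := by omega
    exact_mod_cast this
  have h1 : Real.log ((u - c : ℕ) : ℝ) ≤ Real.log ((u - 1 : ℕ) : ℝ) := by
    rcases Nat.eq_zero_or_pos (u - c) with h | h
    · rw [h]; simp only [Nat.cast_zero, Real.log_zero]
      apply Real.log_nonneg
      have : 1 ≤ u - 1 := by omega
      exact_mod_cast this
    · apply Real.log_le_log (by exact_mod_cast h)
      exact_mod_cast (by omega : u - c ≤ u - 1)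
  have h2 : Real.log (((u - 1 : ℕ) : ℝ) / u) ≤ ((u - 1 : ℕ) : ℝ) / u - 1 :=
    Real.log_le_sub_one_of_pos (by positivity)
  rw [Real.log_div hu1.ne' hu0.ne'] at h2
  have h3 : ((u - 1 : ℕ) : ℝ) / u - 1 = - (1 / u) := by
    rw [Nat.cast_sub (by omega)]; field_simp; simp
  linarith

lemma log_mono_nat {a b : ℕ} (h : a ≤ b) : Real.log (a : ℝ) ≤ Real.log (b : ℝ) := by
  rcases Nat.eq_zero_or_pos a with h0 | h0
  · subst h0; simp only [Nat.cast_zero, Real.log_zero]; exact Real.log_natCast_nonneg b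
  · exact Real.log_le_log (by exact_mod_cast h0) (by exact_mod_cast h)

lemma phase2_step {s : St n} (hs : Inv m K D s) (hk : m ≤ s.k) (κ : ℝ) (hκ : 0 ≤ κ)
    (hn : 1 ≤ n) (hκD : (D : ℝ) ≤ κ * (((n : ℝ) - 1) / 2 - D)) :
    ((rem s).card : ℝ) * (phi s - κ * Real.log s.U.card) ≤
      ∑ e ∈ rem s, (phi (step m K D s e) - κ * Real.log (step m K D s e).U.card) := by
  have hU' : ∀ e, (step m K D s e).U = s.U.filter (fun v => v ∉ e) := by
    intro e
    change newU m s e = _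
    unfold newU
    split_ifs with hw
    · rfl
    · symm; apply filter_true_of_mem
      intro v hv hve
      exact hw (Or.inr ⟨hk, v, hve, hv⟩)
  have hUc : ∀ e, (step m K D s e).U.card = s.U.card - cnt s.U e := by
    intro e; rw [hU']; have := cnt_add s.U e; omega
  have hcle : ∀ e, cnt s.U e ≤ s.U.card := by
    intro e; have := cnt_add s.U e; omega
  have hlog : ∀ e, Real.log (step m K D s e).U.card ≤ Real.log s.U.card := by
    intro e; rw [hUc]; exact log_mono_nat (by omega)
  have hdead : ∀ e, ¬ s.dead → (step m K D s e).dead → iso (insert e s.G) = ∅ ∧ newU m s e ≠ ∅ := by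
    intro e h1 h2
    rcases h2 with h2 | h2 | h2
    · exact absurd h2 h1
    · exact h2
    · omega
  -- it is enough to handle termwise monotone cases
  have easy : (∀ e ∈ rem s, phi s ≤ phi (step m K D s e)) →
      ((rem s).card : ℝ) * (phi s - κ * Real.log s.U.card) ≤
      ∑ e ∈ rem s, (phi (step m K D s e) - κ * Real.log (step m K D s e).U.card) := by
    intro h
    rw [← nsmul_eq_mul, ← sum_const]
    refine sum_le_sum fun e he => ?_
    have h1 := h e he
    have h2 := mul_le_mul_of_nonneg_left (hlog e) hκ
    linarith
  by_cases hd : s.dead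
  · apply easy
    intro e _
    have : (step m K D s e).dead := Or.inl hd
    simp [phi, hd, this]
  by_cases hU : s.U = ∅
  · apply easy
    intro e _
    have hU2 : (step m K D s e).U = ∅ := by rw [hU', hU]; simp
    have : ¬ (step m K D s e).dead := fun h => (hdead e hd h).2 hU2
    simp [phi, hd, this, hU, hU2]
  have hX0 : iso s.G ≠ ∅ := fun h => hU (hs.alive hd h)
  by_cases hXU : iso s.G = s.U
  · apply easy
    intro e he
    have h1 : iso (insert e s.G) = (step m K D s e).U := by
      rw [iso_insert (mem_rem.1 he).2, hXU, hU']
    have h2 : ¬ (step m K D s e).dead := fun h => by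
      have := hdead e hd h
      rw [h1] at this; exact this.2 this.1
    have hone : ∀ A : Finset (Fin n), A ≠ ∅ → (A.card : ℝ) / A.card = 1 := fun A hA =>
      div_self (by simpa using hA)
    have h3 : phi s = 1 := by simp only [phi, hd, if_false, hU, hXU]; exact hone _ hU
    have h4 : phi (step m K D s e) = 1 := by
      simp only [phi, h2, if_false]
      split_ifs with h5
      · rfl
      · change ((iso (insert e s.G)).card : ℝ) / _ = 1
        rw [h1]; exact hone _ h5
    rw [h3, h4]
  -- main case
  have hlt : (iso s.G).card < s.U.card := card_lt_card (lt_of_le_of_ne hs.isoU hXU)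
  have hXpos : 0 < (iso s.G).card := card_pos.2 (nonempty_iff_ne_empty.2 hX0)
  set X := (iso s.G).card with hX
  set u := s.U.card with hu
  have hu2 : 2 ≤ u := by omega
  have hphi : phi s = (X : ℝ) / u := by simp [phi, hd, hU, hX, hu]
  have hphi' : ∀ e ∈ rem s, ((X : ℝ) - cnt (iso s.G) e) / (((u - cnt s.U e : ℕ)) : ℝ) ≤
      phi (step m K D s e) := by
    intro e he
    have h1 := card_iso_step (mem_rem.1 he).2
    rw [← hX] at h1
    rw [← h1, ← hUc]
    unfold phi
    split_ifs with h2 h3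
    · have := (hdead e hd h2).1
      rw [this]; simp
    · rw [h3]; simp
    · exact le_rfl
  have hx0 : ∀ e, cnt s.U e = 0 → cnt (iso s.G) e = 0 := by
    intro e he
    have : cnt (iso s.G) e ≤ cnt s.U e := card_le_card (filter_subset_filter _ hs.isoU)
    omega
  have hur : (2 : ℝ) ≤ u := by exact_mod_cast hu2
  let f : ℕ → Sym2 (Fin n) → ℝ := fun c e =>
    if c = 0 then 0 else if c = 1 then
      ((X : ℝ) - u * cnt (iso s.G) e) / (u * (u - 1)) + κ * (1 / u)
    else (2 * (X : ℝ) - u * cnt (iso s.G) e) / (u * (u - 2)) + κ * (1 / u)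
  have hterm : ∀ e ∈ rem s, (phi s - κ * Real.log u) + f (cnt s.U e) e ≤
      phi (step m K D s e) - κ * Real.log (step m K D s e).U.card := by
    intro e he
    have h1 := hphi' e he
    have h2 := cnt_le_two s.U (mem_rem.1 he).1
    have h3 := hcle e
    have h4 := hx0 e
    have h5 : 1 ≤ cnt s.U e → κ * (1 / u) ≤
        κ * Real.log u - κ * Real.log (step m K D s e).U.card := by
      intro hc
      rw [hUc, ← mul_sub]
      exact mul_le_mul_of_nonneg_left (log_drop hu2 hc h3) hκ
    have h6 : cnt s.U e = u → phi (step m K D s e) = 1 := by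
      intro hc
      have hU2 : (step m K D s e).U = ∅ := by
        rw [← card_eq_zero, hUc]; omega
      have : ¬ (step m K D s e).dead := fun h => (hdead e hd h).2 hU2
      simp [phi, this, hU2]
    have h7 := hlog e
    rw [hphi]
    rcases (by omega : cnt s.U e = 0 ∨ cnt s.U e = 1 ∨ cnt s.U e = 2) with hc | hc | hc
    · rw [hc, h4 hc] at h1
      simp only [hc, f, if_true]
      simp only [Nat.cast_zero, sub_zero, Nat.sub_zero] at h1
      have := mul_le_mul_of_nonneg_left h7 hκ
      linarith
    · have h5' := h5 (by omega)
      rw [hc, Nat.cast_sub (by omega)] at h1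
      simp only [hc, f, if_true, one_ne_zero, if_false]
      have h8 : ((X : ℝ) - cnt (iso s.G) e) / ((u : ℝ) - (1 : ℕ)) =
          (X : ℝ) / u + ((X : ℝ) - u * cnt (iso s.G) e) / (u * (u - 1)) := by
        have : (u : ℝ) - 1 ≠ 0 := by linarith
        push_cast; field_simp; ring
      linarith
    · have h5' := h5 (by omega)
      simp only [hc, f, if_false, two_ne_zero, OfNat.ofNat_ne_one]
      rcases Nat.eq_or_lt_of_le hu2 with h9 | h9
      · have h10 := h6 (by omega)
        rw [h10]
        have h11 : (u : ℝ) - 2 = 0 := by rw [← h9]; norm_num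
        rw [h11, mul_zero, div_zero]
        have h12 : (X : ℝ) / u ≤ 1 := by
          rw [div_le_one (by linarith)]; exact_mod_cast hlt.le
        linarith
      · rw [hc, Nat.cast_sub (by omega)] at h1
        have h8 : ((X : ℝ) - cnt (iso s.G) e) / ((u : ℝ) - (2 : ℕ)) =
            (X : ℝ) / u + (2 * (X : ℝ) - u * cnt (iso s.G) e) / (u * (u - 2)) := by
          have : (3 : ℝ) ≤ u := by exact_mod_cast h9
          have : (u : ℝ) - 2 ≠ 0 := by linarith
          push_cast; field_simp; ring
        linarith
  refine le_trans ?_ (sum_le_sum hterm)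
  rw [sum_add_distrib, sum_const, nsmul_eq_mul]
  have hsplit := sum_split (s := s) f (fun e => by simp [f])
  rw [hsplit]
  -- counts
  have hR2 : 2 * ((R2 s).card : ℝ) = u * (u - 1) := by
    have h1 := card_R2 hs
    have : (2 * ((R2 s).card : ℝ)) = u * ((u - 1 : ℕ) : ℝ) := by exact_mod_cast h1
    rw [this, Nat.cast_sub (by omega)]; simp
  have hx2 : (∑ e ∈ R2 s, (cnt (iso s.G) e : ℝ)) = X * (u - 1) := by
    have h1 := sum_cnt_R2 hs hs.isoU
    have : (∑ e ∈ R2 s, (cnt (iso s.G) e : ℝ)) = X * ((u - 1 : ℕ) : ℝ) := by exact_mod_cast h1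
    rw [this, Nat.cast_sub (by omega)]; simp
  have hx12 : (∑ e ∈ R1 s, (cnt (iso s.G) e : ℝ)) + ∑ e ∈ R2 s, (cnt (iso s.G) e : ℝ) =
      X * ((n : ℝ) - 1) := by
    have h1 := sum_split (s := s) (fun c e => if c = 0 then 0 else (cnt (iso s.G) e : ℝ))
      (fun e => by simp)
    simp only [one_ne_zero, two_ne_zero, if_false] at h1
    rw [← h1]
    have h2 : ∀ e ∈ rem s, (if cnt s.U e = 0 then 0 else (cnt (iso s.G) e : ℝ)) =
        cnt (iso s.G) e := by
      intro e _
      split_ifs with h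
      · rw [hx0 e h]; simp
      · rfl
    rw [sum_congr rfl h2, sum_cnt_rem hs hn]
    have h3 : ∑ v ∈ iso s.G, ((n : ℝ) - 1 - deg s.G v) = ∑ v ∈ iso s.G, ((n : ℝ) - 1) :=
      sum_congr rfl fun v hv => by rw [iso_deg hv]; simp
    rw [h3, sum_const, nsmul_eq_mul]
  have hR1 : (u : ℝ) * (n - 1 - D) ≤ (R1 s).card + 2 * ((R2 s).card : ℝ) := by
    have h1 := sum_split (s := s) (fun c e => (c : ℝ)) (fun e => by simp)
    rw [sum_cnt_rem hs hn] at h1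
    simp only [sum_const, nsmul_eq_mul, Nat.cast_one, mul_one, Nat.cast_ofNat] at h1
    have h2 : ∑ v ∈ s.U, ((n : ℝ) - 1 - D) ≤ ∑ v ∈ s.U, ((n : ℝ) - 1 - deg s.G v) := by
      refine sum_le_sum fun v hv => ?_
      have := hs.degD hk hd v hv
      have : (deg s.G v : ℝ) ≤ D := by exact_mod_cast this
      linarith
    rw [sum_const, nsmul_eq_mul] at h2
    linarith
  have hun : (u : ℝ) ≤ n := by
    have : u ≤ n := by simpa using card_le_univ s.U
    exact_mod_cast this
  have hXu : (X : ℝ) ≤ u - 1 := by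
    have : (X : ℝ) + 1 ≤ u := by exact_mod_cast hlt
    linarith
  have hX0r : (0 : ℝ) ≤ X := Nat.cast_nonneg _
  have hD0 : (0 : ℝ) ≤ D := Nat.cast_nonneg _
  have hf1 : ∑ e ∈ R1 s, f 1 e = ((X : ℝ) * (R1 s).card - u * (X * (n - u))) / (u * (u - 1)) +
      (R1 s).card * (κ * (1 / u)) := by
    simp only [f, one_ne_zero, if_false, if_true]
    rw [sum_add_distrib, sum_const, nsmul_eq_mul, ← sum_div, sum_sub_distrib, sum_const,
      nsmul_eq_mul, ← mul_sum]
    have : (∑ e ∈ R1 s, (cnt (iso s.G) e : ℝ)) = X * (n - u) := by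
      rw [hx2] at hx12; linarith
    rw [this]; ring
  have hf2 : ∑ e ∈ R2 s, f 2 e = (R2 s).card * (κ * (1 / u)) := by
    simp only [f, two_ne_zero, if_false, OfNat.ofNat_ne_one]
    rw [sum_add_distrib, sum_const, nsmul_eq_mul, ← sum_div, sum_sub_distrib, sum_const,
      nsmul_eq_mul, ← mul_sum, hx2]
    have : ((R2 s).card : ℝ) * (2 * X) - u * (X * (u - 1)) = 0 := by
      linear_combination (X : ℝ) * hR2
    rw [this, zero_div, zero_add]
  rw [hf1, hf2]
  have hA : -(D : ℝ) ≤ ((X : ℝ) * (R1 s).card - u * (X * (n - u))) / (u * (u - 1)) := by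
    rw [le_div_iff₀ (by nlinarith)]
    have h1 : (u : ℝ) * (n - u - D) ≤ (R1 s).card := by nlinarith
    have h2 := mul_le_mul_of_nonneg_left h1 hX0r
    have h3 : (u : ℝ) * D * X ≤ u * D * (u - 1) := mul_le_mul_of_nonneg_left hXu (by positivity)
    nlinarith
  have hB : (D : ℝ) ≤ (R1 s).card * (κ * (1 / u)) + (R2 s).card * (κ * (1 / u)) := by
    have h1 : (u : ℝ) * ((n - 1) / 2 - D) ≤ (R1 s).card + (R2 s).card := by nlinarith
    have h2 : ((n : ℝ) - 1) / 2 - D ≤ ((R1 s).card + (R2 s).card) * (1 / u) := by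
      rw [mul_one_div, le_div_iff₀ (by linarith)]; linarith
    have h3 := mul_le_mul_of_nonneg_left h2 hκ
    linarith
  linarith

/-- The main finite bound. -/
lemma alive_bound (hm : 0 < m) (hmN : m < numEdges n) (hn : 1 ≤ n) (κ : ℝ) (hκ : 0 ≤ κ)
    (hκD : (D : ℝ) ≤ κ * (((n : ℝ) - 1) / 2 - D)) (a : ℝ) (ha : 0 ≤ a) (hK : K * a = n) :
    ∑ σ : Ord n, (a / n * ((iso (stAt m K D σ m).G).card : ℝ) - κ * Real.log n
      - a * (if K < ((stAt m K D σ m).U.card : ℝ) then 1 else 0)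
      - a * (if ∃ v, D < deg (stAt m K D σ m).G v then 1 else 0)) ≤
    ∑ σ : Ord n, (if (stAt m K D σ (numEdges n)).dead then 0 else 1) := by
  have h := sum_mono_range (m := m) (K := K) (D := D)
    (fun _ s => phi s - κ * Real.log s.U.card) hm hmN.le le_rfl
    (fun s hs h1 _ => phase2_step hs h1 κ hκ hn hκD)
  have hn0 : (0 : ℝ) < n := by exact_mod_cast hn
  refine (sum_le_sum fun σ _ => ?_).trans (h.trans (sum_le_sum fun σ _ => ?_))
  · have hs := inv_stAt (m := m) (K := K) (D := D) hm σ m hmN.le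
    have hkm := k_eq (m := m) (K := K) (D := D) σ m hmN.le
    have hdd : (stAt m K D σ m).dead → iso (stAt m K D σ m).G = ∅ ∨
        K < ((stAt m K D σ m).U.card : ℝ) ∨ ∃ v, D < deg (stAt m K D σ m).G v := by
      obtain ⟨j, rfl⟩ : ∃ j, m = j + 1 := ⟨m - 1, by omega⟩
      rw [stAt_succ σ j (by omega)]
      rintro (h1 | h1 | h1)
      · have hs' := inv_stAt (m := j + 1) (K := K) (D := D) hm σ j (by omega)
        have hk' := k_eq (m := j + 1) (K := K) (D := D) σ j (by omega)
        have h2 := hs'.dead1 (by omega) h1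
        left
        rw [eq_empty_iff_forall_notMem]
        intro v hv
        have h3 : v ∈ iso (stAt (j + 1) K D σ j).G := by
          simp only [iso, mem_filter, mem_univ, true_and] at hv ⊢
          have := deg_mono (subset_insert (σ ⟨j, by omega⟩).1 (stAt (j + 1) K D σ j).G) v
          exact Nat.le_zero.1 (this.trans hv.le)
        rw [h2] at h3; simp at h3
      · exact Or.inl h1.1
      · exact Or.inr h1.2
    have hKd : ¬ (stAt m K D σ m).dead → ((stAt m K D σ m).U.card : ℝ) ≤ K := by
      obtain ⟨j, rfl⟩ : ∃ j, m = j + 1 := ⟨m - 1, by omega⟩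
      rw [stAt_succ σ j (by omega)]
      intro h1
      by_contra h2
      apply h1
      right; right
      exact ⟨by rw [k_eq (m := j + 1) (K := K) (D := D) σ j (by omega)], Or.inl (not_le.1 h2)⟩
    generalize stAt m K D σ m = s at *
    have hlog : κ * Real.log s.U.card ≤ κ * Real.log n :=
      mul_le_mul_of_nonneg_left (log_mono_nat (by simpa using card_le_univ s.U)) hκ
    have hXn : ((iso s.G).card : ℝ) ≤ n := by
      exact_mod_cast (by simpa using card_le_univ (iso s.G))
    have hXa : a / n * ((iso s.G).card : ℝ) ≤ a := by
      rw [div_mul_eq_mul_div, div_le_iff₀ hn0]; exact mul_le_mul_of_nonneg_left hXn ha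
    have hi1 : 0 ≤ a * (if K < (s.U.card : ℝ) then (1 : ℝ) else 0) := by split_ifs <;> simp [ha]
    have hi2 : 0 ≤ a * (if ∃ v, D < deg s.G v then (1 : ℝ) else 0) := by split_ifs <;> simp [ha]
    by_cases hd : s.dead
    · have : phi s = 0 := by simp [phi, hd]
      rw [this]
      rcases hdd hd with h1 | h1 | h1
      · rw [h1]; simp only [card_empty, Nat.cast_zero, mul_zero]; linarith
      · rw [if_pos h1] at hi1 ⊢; linarith
      · rw [if_pos h1] at hi2 ⊢; linarith
    · by_cases hU : s.U = ∅
      · have h1 : phi s = 1 := by simp [phi, hd, hU]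
        have h2 : iso s.G = ∅ := by
          have := hs.isoU; rw [hU] at this; exact subset_empty.1 this
        rw [h1, h2]; simp only [card_empty, Nat.cast_zero, mul_zero]; linarith
      · have h1 : phi s = ((iso s.G).card : ℝ) / s.U.card := by simp [phi, hd, hU]
        have hu0 : (0 : ℝ) < s.U.card := by
          exact_mod_cast card_pos.2 (nonempty_iff_ne_empty.2 hU)
        have h2 : a / n * ((iso s.G).card : ℝ) ≤ ((iso s.G).card : ℝ) / s.U.card := by
          rw [le_div_iff₀ hu0]
          have h3 : a * (s.U.card : ℝ) ≤ n := by
            rw [← hK, mul_comm K]; exact mul_le_mul_of_nonneg_left (hKd hd) ha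
          have h4 : a / n * (s.U.card : ℝ) ≤ 1 := by
            rw [div_mul_eq_mul_div, div_le_one hn0]; exact h3
          have h5 := mul_le_mul_of_nonneg_left h4 (Nat.cast_nonneg (α := ℝ) (iso s.G).card)
          linarith
        rw [h1]; linarith
  · have hs := inv_stAt (m := m) (K := K) (D := D) hm σ (numEdges n) le_rfl
    generalize stAt m K D σ (numEdges n) = s at *
    have h1 : 0 ≤ κ * Real.log s.U.card := mul_nonneg hκ (Real.log_natCast_nonneg _)
    have h2 : phi s ≤ if s.dead then 0 else 1 := by
      unfold phi
      split_ifs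
      · exact le_rfl
      · exact le_rfl
      · apply div_le_one_of_le₀ _ (Nat.cast_nonneg _)
        exact_mod_cast card_le_card hs.isoU
    linarith

lemma dead_mono (σ : Ord n) {i j : ℕ} (hij : i ≤ j) (hj : j ≤ numEdges n)
    (h : (stAt m K D σ i).dead) : (stAt m K D σ j).dead := by
  induction j, hij using Nat.le_induction with
  | base => exact h
  | succ j hij ih =>
    rw [stAt_succ σ j hj]; exact Or.inl (ih (by omega))

lemma B_mono (σ : Ord n) {i j : ℕ} (hij : i ≤ j) (hj : j ≤ numEdges n) :
    (stAt m K D σ i).B ⊆ (stAt m K D σ j).B := by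
  induction j, hij using Nat.le_induction with
  | base => exact subset_rfl
  | succ j hij ih =>
    rw [stAt_succ σ j hj]
    refine (ih (by omega)).trans ?_
    simp only [step]; split_ifs
    · exact subset_insert _ _
    · exact subset_rfl

lemma success_of_alive (hm : 0 < m) (hmN : m < numEdges n) (hn : 2 ≤ n) (σ : Ord n)
    (h : ¬ (stAt m K D σ (numEdges n)).dead) :
    2 * ((buy (strat n m K D) σ (tau 1 σ)).card : ℝ) ≤ n + K ∧
      ∀ v : Fin n, 1 ≤ deg (buy (strat n m K D) σ (tau 1 σ)) v := by
  have hmem : numEdges n ∈ {k | ∀ v : Fin n, 1 ≤ deg (procEdges σ k) v} := by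
    intro v
    have : Nontrivial (Fin n) := Fin.nontrivial_iff_two_le.2 hn
    obtain ⟨w, hw⟩ := exists_ne v
    have hd : ¬ (s(v, w)).IsDiag := by simpa using hw.symm
    refine card_pos.2 ⟨s(v, w), ?_⟩
    simp only [procEdges, mem_filter, mem_image, mem_univ, true_and]
    exact ⟨⟨σ.symm ⟨_, hd⟩, (σ.symm ⟨_, hd⟩).2, by simp⟩, by simp⟩
  have hτ : tau 1 σ ≤ numEdges n := Nat.sInf_le hmem
  have hτ' : ∀ v : Fin n, 1 ≤ deg (procEdges σ (tau 1 σ)) v := Nat.sInf_mem ⟨_, hmem⟩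
  have hs := inv_stAt (m := m) (K := K) (D := D) hm σ (tau 1 σ) hτ
  have hnd : ¬ (stAt m K D σ (tau 1 σ)).dead := fun h' => h (dead_mono σ hτ le_rfl h')
  have hiso : iso (stAt m K D σ (tau 1 σ)).G = ∅ := by
    rw [eq_empty_iff_forall_notMem]
    intro v hv
    have h1 := iso_deg hv
    rw [G_eq σ _ hτ] at h1
    have := hτ' v
    omega
  have hU := hs.alive hnd hiso
  rw [buy_eq σ _ hτ]
  constructor
  · have hsN := inv_stAt (m := m) (K := K) (D := D) hm σ (numEdges n) le_rfl
    have h2 := hsN.bud2 (by rw [k_eq σ _ le_rfl]; exact hmN.le) h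
    have h3 : ((stAt m K D σ (tau 1 σ)).B.card : ℝ) ≤ (stAt m K D σ (numEdges n)).B.card := by
      exact_mod_cast card_le_card (B_mono σ hτ le_rfl)
    have h4 : (0 : ℝ) ≤ (stAt m K D σ (numEdges n)).U.card := Nat.cast_nonneg _
    linarith
  · intro v
    exact hs.cov v (by rw [hU]; simp)


lemma card_Ord_pos : (0 : ℝ) < Fintype.card (Ord n) := by
  have : Nonempty (Ord n) := ⟨Fintype.equivOfCardEq (by rw [card_nondiag]; simp)⟩
  exact_mod_cast Fintype.card_pos

/-- Lower bound for the success probability at a fixed `n`. -/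
lemma pr_lower (hm : 0 < m) (hmN : m < numEdges n) (hn : 2 ≤ n)
    (κ : ℝ) (hκ : 0 ≤ κ) (hκD : (D : ℝ) ≤ κ * (((n : ℝ) - 1) / 2 - D))
    (a : ℝ) (ha : 0 < a) (hKa : K * a = n)
    (t : ℝ) (ht0 : 0 ≤ t) (ht1 : t ≤ 1) (ht : t * ((numEdges n : ℝ) - m) = (n : ℝ) - 1)
    (δ p : ℝ) (hδ : 0 ≤ δ) (hp : 0 ≤ p)
    (hpK : ∀ u : ℕ, K < u → u ≤ n → p * numEdges n ≤ (u : ℝ) * (u - 1) / 2) :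
    a * (1 - t) ^ m - κ * Real.log n
      - a * (Real.exp (δ * (n - K)) * (Real.exp (-(p * (1 - Real.exp (-(2 * δ)))))) ^ m)
      - a * (n * (1 + t) ^ m / 2 ^ D) ≤
    Pr (fun σ : Ord n =>
      2 * ((buy (strat n m K D) σ (tau 1 σ)).card : ℝ) ≤ n + K ∧
      ∀ v : Fin n, 1 ≤ deg (buy (strat n m K D) σ (tau 1 σ)) v) := by
  have hn0 : (0 : ℝ) < n := by exact_mod_cast (by omega : 0 < n)
  have hK : 0 ≤ K := by
    by_contra h
    push Not at h
    nlinarith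
  have hc := card_Ord_pos (n := n)
  set M : ℝ := ((Fintype.card (Ord n) : ℕ) : ℝ) with hM
  have e1 := exp_iso (K := K) (D := D) hm hmN (by omega) (1 - t) (by linarith)
    (by linarith) (by linarith)
  have e2 := exp_deg (K := K) (D := D) hm hmN (by omega) (1 + t) (by linarith)
    (by linarith)
  have e3 := exp_unc (K := K) (D := D) hm hmN δ p hδ hp hpK hK
  have e4 := alive_bound (K := K) (D := D) hm hmN (by omega) κ hκ hκD a ha.le hKa
  rw [← hM] at e1 e2 e3
  set r : ℝ := Real.exp (-(p * (1 - Real.exp (-(2 * δ)))))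
  have hb : ∑ σ : Ord n, (if K < ((stAt m K D σ m).U.card : ℝ) then (1 : ℝ) else 0) ≤
      M * (Real.exp (δ * (n - K)) * r ^ m) := by
    have h1 : Real.exp (δ * K) *
        ∑ σ : Ord n, (if K < ((stAt m K D σ m).U.card : ℝ) then (1 : ℝ) else 0) ≤
        M * (Real.exp (δ * n) * r ^ m) := by
      refine le_trans ?_ e3
      rw [mul_sum]
      refine sum_le_sum fun σ _ => ?_
      split_ifs with h
      · rw [mul_one]
        exact Real.exp_le_exp.2 (mul_le_mul_of_nonneg_left h.le hδ)
      · simp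
    have h2 : Real.exp (δ * (n - K)) = Real.exp (δ * n) * (Real.exp (δ * K))⁻¹ := by
      rw [← Real.exp_neg, ← Real.exp_add]; ring_nf
    rw [h2]
    have h3 := Real.exp_pos (δ * K)
    calc _ ≤ (M * (Real.exp (δ * n) * r ^ m)) / Real.exp (δ * K) := by
            rw [le_div_iff₀ h3]; linarith
      _ = _ := by field_simp
  have hd : ∑ σ : Ord n, (if ∃ v, D < deg (stAt m K D σ m).G v then (1 : ℝ) else 0) ≤
      M * (n * (1 + t) ^ m / 2 ^ D) := by
    have h1 : (2 : ℝ) ^ D *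
        ∑ σ : Ord n, (if ∃ v, D < deg (stAt m K D σ m).G v then (1 : ℝ) else 0) ≤
        M * (n * (1 + t) ^ m) := by
      refine le_trans ?_ e2
      rw [mul_sum]
      refine sum_le_sum fun σ _ => ?_
      split_ifs with h
      · obtain ⟨v, hv⟩ := h
        rw [mul_one]
        refine le_trans (pow_le_pow_right₀ (by norm_num) hv.le) ?_
        exact single_le_sum (f := fun v => (2 : ℝ) ^ deg (stAt m K D σ m).G v)
          (fun _ _ => by positivity) (mem_univ v)
      · rw [mul_zero]
        exact sum_nonneg fun _ _ => by positivity
    rw [← mul_div_assoc, le_div_iff₀ (by positivity)]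
    linarith
  have hs : ∑ σ : Ord n, (if (stAt m K D σ (numEdges n)).dead then (0 : ℝ) else 1) ≤
      ((univ : Finset (Ord n)).filter (fun σ : Ord n =>
      2 * ((buy (strat n m K D) σ (tau 1 σ)).card : ℝ) ≤ n + K ∧
      ∀ v : Fin n, 1 ≤ deg (buy (strat n m K D) σ (tau 1 σ)) v)).card := by
    rw [card_filter]
    push_cast
    refine sum_le_sum fun σ _ => ?_
    by_cases h : (stAt m K D σ (numEdges n)).dead
    · rw [if_pos h]; split_ifs <;> norm_num
    · rw [if_neg h, if_pos (success_of_alive hm hmN hn σ h)]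
  rw [sum_sub_distrib, sum_sub_distrib, sum_sub_distrib, sum_const, card_univ,
    nsmul_eq_mul, ← hM] at e4
  simp only [← mul_sum] at e4
  unfold Pr
  rw [le_div_iff₀ hc]
  refine le_trans ?_ ((e4.trans hs).trans (le_of_eq (by congr!)))
  have g1 : a / n * (M * (n * (1 - t) ^ m)) ≤
      a / n * ∑ σ : Ord n, ((iso (stAt m K D σ m).G).card : ℝ) :=
    mul_le_mul_of_nonneg_left e1 (by positivity)
  have g1' : a / n * (M * (n * (1 - t) ^ m)) = a * (1 - t) ^ m * M := by field_simp
  have g2 := mul_le_mul_of_nonneg_left hb ha.le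
  have g3 := mul_le_mul_of_nonneg_left hd ha.le
  linarith

lemma one_sub_pow_ge (t : ℝ) (ht1 : t < 1) (m : ℕ) :
    Real.exp (-((m * t) / (1 - t))) ≤ (1 - t) ^ m := by
  have h : Real.exp (-(t / (1 - t))) ≤ 1 - t := by
    have h0 : 0 < 1 - t := by linarith
    rw [Real.exp_neg, inv_le_comm₀ (Real.exp_pos _) h0]
    have := Real.add_one_le_exp (t / (1 - t))
    refine le_trans (le_of_eq ?_) this
    field_simp
    ring
  calc _ = Real.exp (-(t / (1 - t))) ^ m := by
        rw [← Real.exp_nat_mul]; congr 1; ring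
    _ ≤ _ := pow_le_pow_left₀ (Real.exp_pos _).le h m

lemma numEdges_cast (n : ℕ) : (numEdges n : ℝ) = (n : ℝ) * (n - 1) / 2 := by
  rcases n with _ | n
  · simp [numEdges]
  · have h : Even (n * (n + 1)) := Nat.even_mul_succ_self n
    have h2 : (n + 1) * (n + 1 - 1) = n * (n + 1) := by simp [mul_comm]
    unfold numEdges
    rw [h2, Nat.cast_div h.two_dvd (by norm_num)]
    push_cast
    ring

lemma exists_consts (C : ℝ) (hC : 0 < C) : ∃ c p δ γ : ℝ, 0 < c ∧ c < C ∧ 0 < p ∧ p < 1 / C ∧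
    0 < δ ∧ 0 < γ ∧ γ ≤ c * p * δ / (1 + 2 * δ) - (1 - (Real.sqrt C)⁻¹) * δ ∧ p < 1 := by
  set s := Real.sqrt C with hs
  have hs0 : 0 < s := Real.sqrt_pos.2 hC
  have hsC : s * s = C := Real.mul_self_sqrt hC.le
  obtain ⟨c, hc1, hc2⟩ := exists_between (show max 0 (C - s) < C from max_lt hC (by linarith))
  have hc0 : 0 < c := lt_of_le_of_lt (le_max_left _ _) hc1
  have hcs : C - s < c := lt_of_le_of_lt (le_max_right _ _) hc1
  set A := 1 - s⁻¹ with hA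
  have hAC : A * C = C - s := by rw [hA, ← hsC]; field_simp
  have hA1 : A / c < 1 / C := by
    rw [div_lt_div_iff₀ hc0 hC]; linarith
  have hA2 : A / c < 1 := by
    rcases le_or_gt 1 C with h | h
    · exact hA1.trans_le (by rw [div_le_one hC]; exact h)
    · have : s < 1 := by nlinarith
      have : A < 0 := by
        have : A * C < 0 := by rw [hAC, ← hsC]; nlinarith
        by_contra h'
        push Not at h'
        nlinarith
      exact (div_neg_of_neg_of_pos this hc0).trans one_pos
  obtain ⟨p, hp1, hp2⟩ := exists_between (show max 0 (A / c) < min (1 / C) 1 from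
    max_lt (lt_min (by positivity) one_pos) (lt_min hA1 hA2))
  have hp0 : 0 < p := lt_of_le_of_lt (le_max_left _ _) hp1
  have hpA : A / c < p := lt_of_le_of_lt (le_max_right _ _) hp1
  have hpA' : 0 < c * p - A := by
    rw [div_lt_iff₀ hc0] at hpA; linarith
  have hAlt : A < 1 := by rw [hA]; have := inv_pos.2 hs0; linarith
  have hδ : 0 < (c * p - A) / 4 := by positivity
  set δ := (c * p - A) / 4 with hδd
  refine ⟨c, p, δ, c * p * δ / (1 + 2 * δ) - A * δ, hc0, hc2, hp0, hp2.trans_le (min_le_left _ _),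
    hδ, ?_, le_rfl, hp2.trans_le (min_le_right _ _)⟩
  have h3 : A * (1 + 2 * δ) < c * p := by nlinarith
  have : A < c * p / (1 + 2 * δ) := by rw [lt_div_iff₀ (by positivity)]; exact h3
  have h4 : c * p * δ / (1 + 2 * δ) - A * δ = (c * p / (1 + 2 * δ) - A) * δ := by ring
  rw [h4]
  exact mul_pos (by linarith) hδ

lemma tendsto_x (c : ℝ) (hc : 0 < c) :
    Tendsto (fun n : ℕ => ((⌈c / 2 * (n : ℝ)⌉₊ : ℕ) : ℝ) / n) atTop (nhds (c / 2)) :=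
  (tendsto_nat_ceil_mul_div_atTop (by positivity : 0 ≤ c / 2)).comp
    tendsto_natCast_atTop_atTop

/-- The density parameter. -/
noncomputable def tt (c : ℝ) (n : ℕ) : ℝ :=
  (n : ℝ)⁻¹ / (1 / 2 - (((⌈c / 2 * (n : ℝ)⌉₊ : ℕ) : ℝ) / n) * ((n : ℝ) - 1)⁻¹)

lemma tendsto_den (c : ℝ) (hc : 0 < c) :
    Tendsto (fun n : ℕ => 1 / 2 - (((⌈c / 2 * (n : ℝ)⌉₊ : ℕ) : ℝ) / n) * ((n : ℝ) - 1)⁻¹)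
      atTop (nhds (1 / 2)) := by
  have h1 : Tendsto (fun n : ℕ => ((n : ℝ) - 1)⁻¹) atTop (nhds 0) :=
    tendsto_inv_atTop_zero.comp (tendsto_atTop_add_const_right _ (-1) tendsto_natCast_atTop_atTop)
  simpa using tendsto_const_nhds.sub ((tendsto_x c hc).mul h1)

lemma tendsto_tt (c : ℝ) (hc : 0 < c) : Tendsto (tt c) atTop (nhds 0) := by
  have h1 : Tendsto (fun n : ℕ => (n : ℝ)⁻¹) atTop (nhds 0) :=
    tendsto_inv_atTop_zero.comp tendsto_natCast_atTop_atTop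
  have := h1.div (tendsto_den c hc) (by norm_num)
  rw [zero_div] at this
  exact this

lemma tendsto_mtt (c : ℝ) (hc : 0 < c) :
    Tendsto (fun n : ℕ => ((⌈c / 2 * (n : ℝ)⌉₊ : ℕ) : ℝ) * tt c n) atTop (nhds c) := by
  have := (tendsto_x c hc).div (tendsto_den c hc) (by norm_num)
  have e : c / 2 / (1 / 2) = c := by ring
  rw [e] at this
  refine this.congr fun n => ?_
  simp only [tt, Pi.div_apply]
  ring

lemma tt_spec (c : ℝ) (hc : 0 < c) : ∀ᶠ n : ℕ in atTop,
    0 ≤ tt c n ∧ tt c n < 1 ∧ (⌈c / 2 * (n : ℝ)⌉₊ : ℕ) < numEdges n ∧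
    tt c n * ((numEdges n : ℝ) - (⌈c / 2 * (n : ℝ)⌉₊ : ℕ)) = (n : ℝ) - 1 := by
  filter_upwards [(tendsto_den c hc).eventually_const_lt (show (0 : ℝ) < 1 / 2 by norm_num),
    (tendsto_tt c hc).eventually_lt_const one_pos, eventually_ge_atTop 2] with n h1 h2 h3
  have hn : (2 : ℝ) ≤ n := by exact_mod_cast h3
  have hn0 : (0 : ℝ) < n := by linarith
  have hn1 : (0 : ℝ) < (n : ℝ) - 1 := by linarith
  set M := ⌈c / 2 * (n : ℝ)⌉₊ with hM
  set d := 1 / 2 - ((M : ℝ) / n) * ((n : ℝ) - 1)⁻¹ with hd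
  have e : (numEdges n : ℝ) - M = n * (n - 1) * d := by
    rw [numEdges_cast, hd]; field_simp
  have ht : tt c n = (n : ℝ)⁻¹ / d := rfl
  refine ⟨by rw [ht]; positivity, h2, ?_, ?_⟩
  · have : 0 < (numEdges n : ℝ) - M := by rw [e]; positivity
    have h5 : (M : ℝ) < numEdges n := by linarith
    exact_mod_cast h5
  · rw [e, ht]; field_simp

lemma tendsto_D_sqrt :
    Tendsto (fun n : ℕ => ((2 * Nat.log 2 n + 2 : ℕ) : ℝ) / Real.sqrt n) atTop (nhds 0) := by
  have h1 : Tendsto (fun n : ℕ => Real.log n / Real.sqrt n) atTop (nhds 0) := by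
    have := (isLittleO_log_rpow_atTop (show (0 : ℝ) < 1 / 2 by norm_num)).tendsto_div_nhds_zero
    refine (this.comp tendsto_natCast_atTop_atTop).congr fun n => ?_
    simp [Real.sqrt_eq_rpow]
  have h2 : Tendsto (fun n : ℕ => (Real.sqrt n)⁻¹) atTop (nhds 0) :=
    tendsto_inv_atTop_zero.comp (Real.tendsto_sqrt_atTop.comp tendsto_natCast_atTop_atTop)
  have h3 := (h1.const_mul (2 / Real.log 2)).add (h2.const_mul 2)
  simp only [mul_zero, add_zero] at h3
  refine squeeze_zero (fun n => by positivity) (fun n => ?_) h3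
  have h4 : (Nat.log 2 n : ℝ) ≤ Real.log n / Real.log 2 := by
    have := Real.natLog_le_logb n 2
    simpa [Real.logb] using this
  push_cast
  rw [div_eq_mul_inv, add_mul]
  refine add_le_add ?_ le_rfl
  have h5 : 0 ≤ (Real.sqrt n)⁻¹ := by positivity
  calc _ ≤ 2 * (Real.log n / Real.log 2) * (Real.sqrt n)⁻¹ := by gcongr
    _ = _ := by ring

lemma kappa_spec : ∀ᶠ n : ℕ in atTop,
    ((2 * Nat.log 2 n + 2 : ℕ) : ℝ) ≤
      (Real.sqrt n)⁻¹ * (((n : ℝ) - 1) / 2 - (2 * Nat.log 2 n + 2 : ℕ)) := by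
  filter_upwards [tendsto_D_sqrt.eventually_lt_const (show (0 : ℝ) < 1 / 8 by norm_num),
    eventually_ge_atTop 4] with n h1 h2
  have hn : (4 : ℝ) ≤ n := by exact_mod_cast h2
  set D : ℝ := ((2 * Nat.log 2 n + 2 : ℕ) : ℝ)
  have hs : 1 ≤ Real.sqrt n := Real.one_le_sqrt.2 (by linarith)
  have hss : Real.sqrt n * Real.sqrt n = n := Real.mul_self_sqrt (by linarith)
  have hs0 : 0 < Real.sqrt n := by linarith
  have hD : 0 ≤ D := Nat.cast_nonneg _
  rw [div_lt_iff₀ hs0] at h1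
  rw [inv_mul_eq_div, le_div_iff₀ hs0]
  have h3 : D * Real.sqrt n ≤ n / 8 := by
    calc _ ≤ (1 / 8 * Real.sqrt n) * Real.sqrt n := by gcongr
      _ = _ := by rw [mul_assoc, hss]; ring
  have h4 : D ≤ D * Real.sqrt n := le_mul_of_one_le_right hD hs
  linarith

lemma p_spec (C p : ℝ) (hC : 0 < C) (hp0 : 0 < p) (hp : p < 1 / C) : ∀ᶠ n : ℕ in atTop,
    ∀ u : ℕ, (n : ℝ) / Real.sqrt C < u → u ≤ n → p * numEdges n ≤ (u : ℝ) * (u - 1) / 2 := by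
  have hs0 : 0 < Real.sqrt C := Real.sqrt_pos.2 hC
  have hsC : Real.sqrt C * Real.sqrt C = C := Real.mul_self_sqrt hC.le
  have hg : 0 < 1 / C - p := by linarith
  filter_upwards [eventually_ge_atTop ⌈1 / (1 / C - p)⌉₊, eventually_ge_atTop 1] with n h1 h2 u h3 h4
  have hn : (1 : ℝ) ≤ n := by exact_mod_cast h2
  have h5 : 1 / (1 / C - p) ≤ n := Nat.ceil_le.1 h1
  rw [div_le_iff₀ hg] at h5
  have h4' : (u : ℝ) ≤ n := by exact_mod_cast h4
  have h6 : (n : ℝ) / Real.sqrt C * (n / Real.sqrt C) ≤ u * u := by gcongr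
  have h7 : (n : ℝ) / Real.sqrt C * (n / Real.sqrt C) = n * n * (1 / C) := by
    rw [div_mul_div_comm, hsC]; ring
  rw [numEdges_cast]
  have h8 : (n : ℝ) * 1 ≤ n * (n * (1 / C - p)) := by gcongr
  have h9 : 0 ≤ p * n := by positivity
  nlinarith

lemma main_limit (C c γ : ℝ) (hc : 0 < c) (hγ : 0 < γ) :
    Tendsto (fun n : ℕ => Real.sqrt C * Real.exp (-((⌈c / 2 * (n : ℝ)⌉₊ : ℕ) * tt c n / (1 - tt c n)))
      - (Real.sqrt n)⁻¹ * Real.log n - Real.sqrt C * Real.exp (-(γ * n))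
      - Real.sqrt C * (Real.exp ((⌈c / 2 * (n : ℝ)⌉₊ : ℕ) * tt c n) * (n : ℝ)⁻¹)) atTop
      (nhds (Real.sqrt C * Real.exp (-c))) := by
  have h0 : Tendsto (fun n : ℕ => (n : ℝ)⁻¹) atTop (nhds 0) :=
    tendsto_inv_atTop_zero.comp tendsto_natCast_atTop_atTop
  have h1 : Tendsto (fun n : ℕ => (Real.sqrt n)⁻¹ * Real.log n) atTop (nhds 0) := by
    have := (isLittleO_log_rpow_atTop (show (0 : ℝ) < 1 / 2 by norm_num)).tendsto_div_nhds_zero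
    refine (this.comp tendsto_natCast_atTop_atTop).congr fun n => ?_
    simp only [Real.sqrt_eq_rpow, Function.comp]
    rw [div_eq_inv_mul]
  have h2 : Tendsto (fun n : ℕ => Real.exp (-(γ * n))) atTop (nhds 0) :=
    Real.tendsto_exp_neg_atTop_nhds_zero.comp
      (tendsto_natCast_atTop_atTop.const_mul_atTop hγ)
  have h3 := (Real.continuous_exp.tendsto _).comp (tendsto_mtt c hc)
  have h4 := ((tendsto_mtt c hc).div ((tendsto_const_nhds (x := (1 : ℝ))).sub (tendsto_tt c hc))
    (by norm_num)).neg
  have h5 := (Real.continuous_exp.tendsto _).comp h4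
  have := (((h5.const_mul (Real.sqrt C)).sub h1).sub (h2.const_mul (Real.sqrt C))).sub
    ((h3.mul h0).const_mul (Real.sqrt C))
  simpa [Function.comp_def] using this

lemma main_aux (C : ℝ) (hC : 0 < C) :
    ∃ st : (n : ℕ) → Strategy n,
      ∀ η : ℝ, 0 < η → ∀ᶠ n : ℕ in Filter.atTop,
        (1 - η) * Real.sqrt C * Real.exp (-C) ≤
          Pr (fun σ : Ord n =>
            ((buy (st n) σ (tau 1 σ)).card : ℝ) ≤ (1 / 2 + (Real.sqrt C)⁻¹ / 2) * n ∧
            ∀ v : Fin n, 1 ≤ deg (buy (st n) σ (tau 1 σ)) v) := by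
  obtain ⟨c, p, δ, γ, hc, hcC, hp0, hpC, hδ, hγ, hγ2, hp1⟩ := exists_consts C hC
  have hs0 : 0 < Real.sqrt C := Real.sqrt_pos.2 hC
  refine ⟨fun n => strat n ⌈c / 2 * (n : ℝ)⌉₊ (n / Real.sqrt C) (2 * Nat.log 2 n + 2),
    fun η hη => ?_⟩
  have hlim : (1 - η) * Real.sqrt C * Real.exp (-C) < Real.sqrt C * Real.exp (-c) := by
    have h1 : Real.exp (-C) < Real.exp (-c) := Real.exp_lt_exp.2 (by linarith)
    have h2 : 0 < Real.sqrt C * Real.exp (-C) := by positivity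
    nlinarith
  filter_upwards [(main_limit C c γ hc hγ).eventually_const_lt hlim, tt_spec c hc, kappa_spec,
    p_spec C p hC hp0 hpC, eventually_ge_atTop 2] with n h1 h2 h3 h4 hn
  obtain ⟨t0, t1, hmN, ht⟩ := h2
  have hnR : (2 : ℝ) ≤ n := by exact_mod_cast hn
  have hn0 : (0 : ℝ) < n := by linarith
  set s := Real.sqrt C with hs
  set m := ⌈c / 2 * (n : ℝ)⌉₊ with hm
  set D := 2 * Nat.log 2 n + 2 with hD
  set t := tt c n
  have hm0 : 0 < m := Nat.ceil_pos.2 (by positivity)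
  have hmge : c / 2 * n ≤ m := Nat.le_ceil _
  have key := pr_lower (n := n) (m := m) (D := D) (K := (n : ℝ) / s) hm0 hmN hn
    (Real.sqrt n)⁻¹ (by positivity) h3 s hs0 (by field_simp) t t0 t1.le ht δ p hδ.le hp0.le h4
  have hev : (fun σ : Ord n =>
      2 * ((buy (strat n m (n / s) D) σ (tau 1 σ)).card : ℝ) ≤ n + n / s ∧
      ∀ v : Fin n, 1 ≤ deg (buy (strat n m (n / s) D) σ (tau 1 σ)) v) =
      (fun σ : Ord n =>
      ((buy (strat n m (n / s) D) σ (tau 1 σ)).card : ℝ) ≤ (1 / 2 + s⁻¹ / 2) * n ∧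
      ∀ v : Fin n, 1 ≤ deg (buy (strat n m (n / s) D) σ (tau 1 σ)) v) := by
    funext σ
    have e : (1 / 2 + s⁻¹ / 2) * (n : ℝ) = (n + n / s) / 2 := by field_simp
    rw [e, le_div_iff₀ (by norm_num : (0 : ℝ) < 2), mul_comm (2 : ℝ)]
  rw [hev] at key
  refine h1.le.trans (le_trans ?_ key)
  have b1 := one_sub_pow_ge t t1 m
  have b2 : Real.exp (δ * (n - n / s)) * (Real.exp (-(p * (1 - Real.exp (-(2 * δ)))))) ^ m ≤
      Real.exp (-(γ * n)) := by
    rw [← Real.exp_nat_mul, ← Real.exp_add]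
    refine Real.exp_le_exp.2 ?_
    have hx : 2 * δ / (1 + 2 * δ) ≤ 1 - Real.exp (-(2 * δ)) := by
      have h5 := Real.add_one_le_exp (2 * δ)
      have h6 : Real.exp (-(2 * δ)) ≤ 1 / (1 + 2 * δ) := by
        rw [Real.exp_neg, ← one_div]
        exact one_div_le_one_div_of_le (by positivity) (by linarith)
      have h7 : 2 * δ / (1 + 2 * δ) = 1 - 1 / (1 + 2 * δ) := by field_simp; ring
      linarith
    have hx2 : (c / 2 * n) * (p * (2 * δ / (1 + 2 * δ))) ≤
        m * (p * (1 - Real.exp (-(2 * δ)))) := by gcongr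
    have hx3 : (c / 2 * n) * (p * (2 * δ / (1 + 2 * δ))) = c * p * δ / (1 + 2 * δ) * n := by
      ring
    have hx4 : δ * ((n : ℝ) - n / s) = (1 - s⁻¹) * δ * n := by ring
    have hx5 := mul_le_mul_of_nonneg_right hγ2 hn0.le
    rw [hx3] at hx2
    rw [hx4]
    linarith
  have b3 : (n : ℝ) * (1 + t) ^ m / 2 ^ D ≤ Real.exp (m * t) * (n : ℝ)⁻¹ := by
    have h5 : (1 + t) ^ m ≤ Real.exp (m * t) := by
      rw [Real.exp_nat_mul]
      have := Real.add_one_le_exp t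
      exact pow_le_pow_left₀ (by linarith) (by linarith) m
    have h6 : (n : ℝ) * n ≤ 2 ^ D := by
      have h7 : n < 2 ^ (Nat.log 2 n + 1) := Nat.lt_pow_succ_log_self (by norm_num) n
      have h8 : n * n ≤ 2 ^ D := by
        have : 2 ^ D = 2 ^ (Nat.log 2 n + 1) * 2 ^ (Nat.log 2 n + 1) := by
          rw [← pow_add]; congr 1; omega
        rw [this]
        exact Nat.mul_le_mul h7.le h7.le
      exact_mod_cast h8
    calc (n : ℝ) * (1 + t) ^ m / 2 ^ D ≤ n * Real.exp (m * t) / (n * n) := by gcongr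
      _ = _ := by field_simp
  have c1 := mul_le_mul_of_nonneg_left b1 hs0.le
  have c2 := mul_le_mul_of_nonneg_left b2 hs0.le
  have c3 := mul_le_mul_of_nonneg_left b3 hs0.le
  linarith

end Aux

end RGP


namespace RGP

/-- For every constant `C > 0`, Builder has a deterministic online
strategy such that, with probability at least `(1 − o(1))·√C·e^{−C}` as `n → ∞`,
she purchases at most `(1/2 + C^{−1/2}/2)·n` edges among `e_1, …, e_{τ_1}` and her
graph `B_{τ_1}` has minimum degree at least `1`. -/
theorem builder_min_degree_one (C : ℝ) (hC : 0 < C) :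
    ∃ st : (n : ℕ) → Strategy n,
      ∀ η : ℝ, 0 < η → ∀ᶠ n : ℕ in Filter.atTop,
        (1 - η) * Real.sqrt C * Real.exp (-C) ≤
          Pr (fun σ : Ord n =>
            ((buy (st n) σ (tau 1 σ)).card : ℝ) ≤ (1 / 2 + (Real.sqrt C)⁻¹ / 2) * n ∧
            ∀ v : Fin n, 1 ≤ deg (buy (st n) σ (tau 1 σ)) v) := by
  exact main_aux C hC

end RGP
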